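/- arXiv:2008.00361 — 2 statements merged into one kernel-verified Lean document; each statement's English description precedes it below -/
import Mathlib

section
/- For every integer k ≥ 1: if k is even, then GR_k(H1) = 17^(k/2) + 1, and if k is odd, then GR_k(H1) = 4·17^((k−1)/2) + 1. -/
open SimpleGraph

/-- A rainbow triangle in an edge-coloring of a complete graph: three distinct
vertices whose three pairwise edges receive three pairwise distinct colors. -/
def HasRainbowTriangle {n k : ℕ} (c : Fin n → Fin n → Fin k) : Prop :=
  ∃ u v w : Fin n, u ≠ v ∧ u ≠ w ∧ v ≠ w ∧
    c u v ≠ c u w ∧ c u v ≠ c v w ∧ c u w ≠ c v w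

/-- A Gallai `k`-coloring of `K_n`: a symmetric edge-coloring with no rainbow triangle. -/
def IsGallaiColoring {n k : ℕ} (c : Fin n → Fin n → Fin k) : Prop :=
  (∀ u v, c u v = c v u) ∧ ¬ HasRainbowTriangle c

/-- A monochromatic copy of the graph `F` in color `i`: an injection of the vertices
of `F` into the vertices of `K_n` mapping every edge of `F` to an edge colored `i`. -/
def HasMonoCopy {V : Type} (F : SimpleGraph V) {n k : ℕ}
    (c : Fin n → Fin n → Fin k) (i : Fin k) : Prop :=
  ∃ f : V → Fin n, Function.Injective f ∧ ∀ a b, F.Adj a b → c (f a) (f b) = i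

/-- The Gallai-Ramsey number `GR(F₁, …, F_k)`: the least `n` such that every Gallai
`k`-coloring of `K_n` contains, for some color `i`, a monochromatic copy of `Fᵢ`
in color `i`. -/
noncomputable def GR (k : ℕ) (F : Fin k → Σ V : Type, SimpleGraph V) : ℕ :=
  sInf {n : ℕ | ∀ c : Fin n → Fin n → Fin k, IsGallaiColoring c →
    ∃ i : Fin k, HasMonoCopy (F i).2 c i}

/-- The triangle `K₃`. -/
def GK3 : SimpleGraph (Fin 3) := ⊤

/-- The path `P₃` on three vertices (edges 0–1 and 1–2). -/
def GP3 : SimpleGraph (Fin 3) := SimpleGraph.fromRel (fun a _ => a = 1)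

/-- `H₁`: a `K₄` on `{0,1,2,3}` together with the extra vertex `4` adjacent to
exactly the vertex `3`. -/
def GH1 : SimpleGraph (Fin 5) :=
  SimpleGraph.fromRel (fun a b => (a ≠ 4 ∧ b ≠ 4) ∨ (a = 3 ∧ b = 4))

/-- `H₂`: `K₅` minus the two edges 0–1 and 1–2 of a path on three vertices. -/
def GH2 : SimpleGraph (Fin 5) :=
  (⊤ : SimpleGraph (Fin 5)) \
    SimpleGraph.fromRel (fun a b => (a = 0 ∧ b = 1) ∨ (a = 1 ∧ b = 2))

/-- `H₃`: `K₅` minus the edge 0–1. -/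
def GH3 : SimpleGraph (Fin 5) :=
  (⊤ : SimpleGraph (Fin 5)) \ SimpleGraph.fromRel (fun a b => a = 0 ∧ b = 1)

namespace GRH1

section

/-- `Q` is a clique in color `i`. -/
def Cl {V K : Type} (c : V → V → K) (i : K) (Q : Finset V) : Prop :=
  ∀ u ∈ Q, ∀ v ∈ Q, u ≠ v → c u v = i

/-- The clique number in color `i` on `S` is at most `m`. -/
def Fr {V K : Type} (c : V → V → K) (i : K) (m : ℕ) (S : Finset V) : Prop :=
  ∀ Q, Q ⊆ S → Cl c i Q → Q.card ≤ m

/-- No `H1` in color `i` on `S`. -/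
def HF {V K : Type} (c : V → V → K) (i : K) (S : Finset V) : Prop :=
  ∀ Q, Q ⊆ S → Cl c i Q → Q.card = 4 → ∀ u ∈ Q, ∀ v ∈ S, v ∉ Q → c u v ≠ i

/-- No rainbow triangle. -/
def NR {V K : Type} (c : V → V → K) : Prop :=
  ∀ u v w, u ≠ v → u ≠ w → v ≠ w → c u v = c u w ∨ c u v = c v w ∨ c u w = c v w

/-- All pairs in `T` are colored `a` or `b`. -/
def TC {V K : Type} (c : V → V → K) (a b : K) (T : Finset V) : Prop :=
  ∀ u ∈ T, ∀ v ∈ T, u ≠ v → c u v = a ∨ c u v = b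

def CutConn {V K : Type} (c : V → V → K) (i : K) (S : Finset V) : Prop :=
  ∀ X, X ⊆ S → X.Nonempty → X ≠ S → ∃ u ∈ X, ∃ v ∈ S, v ∉ X ∧ c u v = i

end

section
open Classical

variable {V K : Type} {c : V → V → K}

theorem Fr.mono {i : K} {m : ℕ} {S X : Finset V} (h : Fr c i m S) (hX : X ⊆ S) : Fr c i m X :=
  fun Q hQ => h Q (hQ.trans hX)

theorem TC.mono {a b : K} {S X : Finset V} (h : TC c a b S) (hX : X ⊆ S) : TC c a b X :=
  fun u hu v hv => h u (hX hu) v (hX hv)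

theorem TC.swap {a b : K} {S : Finset V} (h : TC c a b S) : TC c b a S :=
  fun u hu v hv huv => (h u hu v hv huv).symm

theorem HF.mono {i : K} {S X : Finset V} (h : HF c i S) (hX : X ⊆ S) : HF c i X :=
  fun Q hQ hc h4 u hu v hv => h Q (hQ.trans hX) hc h4 u hu v (hX hv)

theorem Fr.join (hs : ∀ u v, c u v = c v u) {i : K} {m t : ℕ} {S X Q : Finset V}
    (h : Fr c i (m + t) S) (hX : X ⊆ S) (hQ : Q ⊆ S)
    (hj : ∀ x ∈ X, ∀ y ∈ Q, x ≠ y ∧ c x y = i) (hc : Cl c i Q) (ht : t ≤ Q.card) :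
    Fr c i m X := by
  intro R hR hRc
  have hd : Disjoint R Q := by
    rw [Finset.disjoint_left]
    intro x hx hx'
    exact (hj x (hR hx) x hx').1 rfl
  have := h (R ∪ Q) (Finset.union_subset (hR.trans hX) hQ) (by
    intro u hu v hv huv
    rcases Finset.mem_union.1 hu with hu | hu <;> rcases Finset.mem_union.1 hv with hv | hv
    · exact hRc u hu v hv huv
    · exact (hj u (hR hu) v hv).2
    · rw [hs]; exact (hj v (hR hv) u hu).2
    · exact hc u hu v hv huv)
  rw [Finset.card_union_of_disjoint hd] at this
  omega

theorem Cl.singleton (i : K) (v : V) : Cl c i {v} := by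
  intro u hu w hw h
  simp at hu hw
  exact absurd (hu.trans hw.symm) h

theorem Fr.join1 (hs : ∀ u v, c u v = c v u) {i : K} {m : ℕ} {S X : Finset V} {v : V}
    (h : Fr c i (m + 1) S) (hX : X ⊆ S) (hv : v ∈ S)
    (hj : ∀ x ∈ X, x ≠ v ∧ c v x = i) : Fr c i m X := by
  refine h.join hs hX (Q := {v}) (by simpa using hv) ?_ (Cl.singleton i v) (by simp)
  intro x hx y hy
  simp at hy
  subst hy
  exact ⟨(hj x hx).1, by rw [hs]; exact (hj x hx).2⟩

theorem not_Fr1 {i : K} {S : Finset V} (h : ¬ Fr c i 1 S) :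
    ∃ Q, Q ⊆ S ∧ Cl c i Q ∧ Q.card = 2 := by
  unfold Fr at h
  push Not at h
  obtain ⟨Q, hQ, hc, h2⟩ := h
  obtain ⟨R, hR, hR2⟩ := Finset.exists_subset_card_eq (show 2 ≤ Q.card by omega)
  exact ⟨R, hR.trans hQ, fun u hu v hv => hc u (hR hu) v (hR hv), hR2⟩

theorem Fr1_ne {i : K} {S : Finset V} (hs : ∀ u v, c u v = c v u) (h : Fr c i 1 S)
    {u v : V} (hu : u ∈ S) (hv : v ∈ S) (huv : u ≠ v) : c u v ≠ i := by
  intro hi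
  have := h {u, v} (by intro x; simp; rintro (rfl | rfl) <;> assumption) (by
    intro x hx y hy hxy
    simp at hx hy
    rcases hx with rfl | rfl <;> rcases hy with rfl | rfl
    · exact absurd rfl hxy
    · exact hi
    · rw [hs]; exact hi
    · exact absurd rfl hxy)
  rw [Finset.card_pair huv] at this
  omega

/-! Small Ramsey numbers -/

theorem ram1 (hs : ∀ u v, c u v = c v u) {a b : K} {m : ℕ} {T : Finset V}
    (hT : TC c a b T) (ha : Fr c a 1 T) (hb : Fr c b m T) : T.card ≤ m := by
  refine hb T subset_rfl ?_
  intro u hu v hv huv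
  exact (hT u hu v hv huv).resolve_left (Fr1_ne hs ha hu hv huv)

theorem ram_split {a b : K} (hab : a ≠ b) {T : Finset V} {v : V} (hT : TC c a b T) (hv : v ∈ T) :
    T.card = 1 + ((T.erase v).filter (fun u => c v u = a)).card
      + ((T.erase v).filter (fun u => c v u = b)).card := by
  have h1 := Finset.card_erase_add_one hv
  have h2 := Finset.card_filter_add_card_filter_not (s := T.erase v) (fun u => c v u = a)
  have h3 : (T.erase v).filter (fun u => ¬ c v u = a) = (T.erase v).filter (fun u => c v u = b) := by
    apply Finset.filter_congr
    intro u hu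
    rw [Finset.mem_erase] at hu
    have := hT v hv u hu.2 hu.1.symm
    constructor
    · intro h; exact this.resolve_left h
    · intro h h'; exact hab (h'.symm.trans h)
  rw [h3] at h2
  omega

theorem nb_sub {i : K} (T : Finset V) (v : V) :
    (T.erase v).filter (fun u => c v u = i) ⊆ T :=
  (Finset.filter_subset _ _).trans (Finset.erase_subset _ _)

theorem nb_fr (hs : ∀ u v, c u v = c v u) {i : K} {m : ℕ} {T : Finset V} {v : V}
    (h : Fr c i (m + 1) T) (hv : v ∈ T) :
    Fr c i m ((T.erase v).filter (fun u => c v u = i)) := by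
  refine h.join1 hs (nb_sub T v) hv ?_
  intro x hx
  simp at hx
  exact ⟨hx.1.1, hx.2⟩

theorem ram33 (hs : ∀ u v, c u v = c v u) {a b : K} (hab : a ≠ b) {T : Finset V}
    (hT : TC c a b T) (ha : Fr c a 2 T) (hb : Fr c b 2 T) : T.card ≤ 5 := by
  rcases T.eq_empty_or_nonempty with rfl | ⟨v, hv⟩
  · simp
  have h := ram_split hab hT hv
  have h1 := ram1 hs (hT.mono (nb_sub T v)) (nb_fr hs ha hv) (hb.mono (nb_sub T v))
  have h2 := ram1 hs (hT.mono (nb_sub T v)).swap (nb_fr hs hb hv) (ha.mono (nb_sub T v))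
  omega

theorem ram34 [Fintype V] (hs : ∀ u v, c u v = c v u) {a b : K} (hab : a ≠ b) {T : Finset V}
    (hT : TC c a b T) (ha : Fr c a 2 T) (hb : Fr c b 3 T) : T.card ≤ 8 := by
  by_contra hcon
  have key : ∀ v ∈ T, T.card = 9 ∧ ((T.erase v).filter (fun u => c v u = a)).card = 3 := by
    intro v hv
    have h := ram_split hab hT hv
    have h1 := ram1 hs (hT.mono (nb_sub T v)) (nb_fr hs ha hv) (hb.mono (nb_sub T v))
    have h2 := ram33 hs hab (hT.mono (nb_sub T v)) (ha.mono (nb_sub T v)) (nb_fr hs hb hv)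
    omega
  let G : SimpleGraph V :=
    { Adj := fun u v => u ∈ T ∧ v ∈ T ∧ u ≠ v ∧ c u v = a
      symm := ⟨fun u v h => ⟨h.2.1, h.1, h.2.2.1.symm, by rw [hs]; exact h.2.2.2⟩⟩
      loopless := ⟨fun u h => h.2.2.1 rfl⟩ }
  have hsum := G.sum_degrees_eq_twice_card_edges
  have hdeg : ∀ v, G.degree v = if v ∈ T then 3 else 0 := by
    intro v
    split_ifs with hv
    · rw [← (key v hv).2, ← SimpleGraph.card_neighborFinset_eq_degree]
      congr 1
      ext u
      simp [G, hv]
      tauto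
    · rw [← SimpleGraph.card_neighborFinset_eq_degree, Finset.card_eq_zero]
      ext u
      simp [G, hv]
  simp only [hdeg] at hsum
  rw [Finset.sum_ite_mem, Finset.univ_inter] at hsum
  simp at hsum
  have : T.Nonempty := by
    rw [Finset.nonempty_iff_ne_empty]
    rintro rfl
    simp at hcon
  obtain ⟨v, hv⟩ := this
  have := (key v hv).1
  omega

theorem ram44 [Fintype V] (hs : ∀ u v, c u v = c v u) {a b : K} (hab : a ≠ b) {T : Finset V}
    (hT : TC c a b T) (ha : Fr c a 3 T) (hb : Fr c b 3 T) : T.card ≤ 17 := by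
  rcases T.eq_empty_or_nonempty with rfl | ⟨v, hv⟩
  · simp
  have h := ram_split hab hT hv
  have h1 := ram34 hs hab (hT.mono (nb_sub T v)) (nb_fr hs ha hv) (hb.mono (nb_sub T v))
  have h2 := ram34 hs hab.symm (hT.mono (nb_sub T v)).swap (nb_fr hs hb hv) (ha.mono (nb_sub T v))
  omega

/-! Gallai's structure theorem -/

/-- Reachability in color `i` inside `S`. -/
def Cn (c : V → V → K) (i : K) (S : Finset V) : V → V → Prop :=
  Relation.ReflTransGen (fun x y => x ∈ S ∧ y ∈ S ∧ x ≠ y ∧ c x y = i)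

theorem Cn.symm' (hs : ∀ u v, c u v = c v u) {i : K} {S : Finset V} {u v : V}
    (h : Cn c i S u v) : Cn c i S v u := by
  induction h with
  | refl => exact Relation.ReflTransGen.refl
  | tail _ h ih =>
    exact Relation.ReflTransGen.head
      ⟨h.2.1, h.1, h.2.2.1.symm, by rw [hs]; exact h.2.2.2⟩ ih

theorem Cn.mem {i : K} {S : Finset V} {u v : V} (hu : u ∈ S) (h : Cn c i S u v) : v ∈ S := by
  rcases Relation.ReflTransGen.cases_tail h with h | ⟨w, _, h⟩
  · rw [h]; exact hu
  · exact h.2.1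

theorem Cn.module (hs : ∀ u v, c u v = c v u) (hn : NR c) {i : K} {S : Finset V} {y w v : V}
    (hv : v ∈ S) (hvy : ¬ Cn c i S y v) (h : Cn c i S y w) : c v w = c v y := by
  induction h with
  | refl => rfl
  | @tail w w' h1 h2 ih =>
    rw [← ih]
    have hw : w ≠ v := by rintro rfl; exact hvy h1
    have hw' : w' ≠ v := by rintro rfl; exact hvy (h1.tail h2)
    have n1 : c v w ≠ i := fun h => hvy (h1.tail ⟨h2.1, hv, hw, by rw [hs]; exact h⟩)
    have n2 : c v w' ≠ i := fun h =>
      hvy ((h1.tail h2).tail ⟨h2.2.1, hv, hw', by rw [hs]; exact h⟩)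
    rcases hn v w w' hw.symm hw'.symm h2.2.2.1 with h | h | h
    · exact h.symm
    · exact absurd (h.trans h2.2.2.2) n1
    · exact absurd (h.trans h2.2.2.2) n2

/-- if `i` is not cut-connected then from no vertex can one reach everything -/
theorem not_cutConn_reach (hs : ∀ u v, c u v = c v u) {i : K} {S : Finset V}
    (h : ¬ CutConn c i S) (y : V) (_ : y ∈ S) : ∃ v ∈ S, ¬ Cn c i S y v := by
  by_contra hcon
  push Not at hcon
  apply h
  intro X hX hne hXS
  by_contra hno
  push Not at hno
  have closed : ∀ u ∈ X, ∀ v, Cn c i S u v → v ∈ X := by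
    intro u hu v huv
    induction huv with
    | refl => exact hu
    | @tail w w' h1 h2 ih =>
      by_contra hw'
      exact hno w ih w' h2.2.1 hw' h2.2.2.2
  obtain ⟨u, hu⟩ := hne
  have hyX := closed u hu y ((hcon u (hX hu)).symm' hs)
  exact hXS (Finset.Subset.antisymm hX fun v hv => closed y hyX v (hcon v hv))

theorem gallai_step (hs : ∀ u v, c u v = c v u) (hn : NR c) {i j k : K}
    (hij : i ≠ j) (hik : i ≠ k) (hjk : j ≠ k) {S : Finset V} {x : V} (hx : x ∈ S)
    (h2 : 2 ≤ S.card) (hi : CutConn c i S) (hj : CutConn c j S) (hk : CutConn c k S)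
    (hni : ¬ CutConn c i (S.erase x)) : False := by
  have hxS : ({x} : Finset V) ≠ S := by
    rintro rfl; simp at h2
  obtain ⟨x1, hx1, y, hy, hyx, hyj⟩ := hj {x} (by simpa using hx) (by simp) hxS
  obtain ⟨x2, hx2, z, hz, hzx, hzk⟩ := hk {x} (by simpa using hx) (by simp) hxS
  simp at hx1 hx2 hyx hzx
  subst hx1
  subst hx2
  have hy' : y ∈ S.erase x2 := by simp [hy, hyx]
  have hz' : z ∈ S.erase x2 := by simp [hz, hzx]
  -- a component sends an i-edge to x
  have exits : ∀ X, X ⊆ S.erase x2 → X.Nonempty →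
      (∀ u ∈ X, ∀ v ∈ S.erase x2, v ∉ X → c u v ≠ i) → ∃ u ∈ X, c x2 u = i := by
    intro X hX hne hcl
    obtain ⟨u, hu, v, hv, hvX, huv⟩ := hi X (hX.trans (Finset.erase_subset _ _)) hne (by
      rintro rfl
      have := hX hx
      simp at this)
    by_cases hvx : v = x2
    · subst hvx
      exact ⟨u, hu, by rw [hs]; exact huv⟩
    · exact absurd huv (hcl u hu v (by simp [hv, hvx]) hvX)
  have comp : ∀ y ∈ S.erase x2, ∃ u, Cn c i (S.erase x2) y u ∧ c x2 u = i := by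
    intro y hy
    obtain ⟨u, hu, hu2⟩ := exits ((S.erase x2).filter (fun u => Cn c i (S.erase x2) y u))
      (Finset.filter_subset _ _) ⟨y, Finset.mem_filter.2 ⟨hy, Relation.ReflTransGen.refl⟩⟩ (by
        intro u hu v hv hvX h
        rw [Finset.mem_filter] at hu hvX
        apply hvX
        refine ⟨hv, hu.2.tail ⟨hu.1, hv, ?_, h⟩⟩
        rintro rfl
        exact hvX hu)
    exact ⟨u, (Finset.mem_filter.1 hu).2, hu2⟩
  -- an edge from x in color ≠ i agrees with the edges to i-neighbours of x in other comps
  have agree : ∀ y ∈ S.erase x2, ∀ w ∈ S.erase x2, c x2 y ≠ i → c x2 w = i →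
      ¬ Cn c i (S.erase x2) y w → c y w = c x2 y := by
    intro y hy w hw h1 h2 h3
    have hyw : y ≠ w := by rintro rfl; exact h1 h2
    have hne : c y w ≠ i := fun h => h3 (Relation.ReflTransGen.single ⟨hy, hw, hyw, h⟩)
    rcases hn x2 y w (Finset.ne_of_mem_erase hy).symm (Finset.ne_of_mem_erase hw).symm hyw
      with h | h | h
    · exact absurd (h.trans h2) h1
    · exact h.symm
    · exact absurd (h.symm.trans h2) hne
  have nyi : c x2 y ≠ i := by rw [hyj]; exact hij.symm
  have nzi : c x2 z ≠ i := by rw [hzk]; exact hik.symm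
  suffices c x2 y = c x2 z from hjk (hyj.symm.trans (this.trans hzk))
  by_cases hyz : Cn c i (S.erase x2) y z
  · obtain ⟨v, hv, hyv⟩ := not_cutConn_reach hs hni y hy'
    obtain ⟨w, hvw, hxw⟩ := comp v hv
    have hw := hvw.mem hv
    have hyw : ¬ Cn c i (S.erase x2) y w := fun h =>
      hyv (Relation.ReflTransGen.trans h (hvw.symm' hs))
    have hzw : ¬ Cn c i (S.erase x2) z w := fun h => hyw (Relation.ReflTransGen.trans hyz h)
    have e1 := agree y hy' w hw nyi hxw hyw
    have e2 := agree z hz' w hw nzi hxw hzw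
    have e3 := Cn.module hs hn hw hyw hyz
    rw [← e1, ← e2, hs y, hs z, e3]
  · have hzy : ¬ Cn c i (S.erase x2) z y := fun h => hyz (h.symm' hs)
    obtain ⟨w, hyw, hxw⟩ := comp y hy'
    obtain ⟨w', hzw', hxw'⟩ := comp z hz'
    have e1 := agree y hy' w' (hzw'.mem hz') nyi hxw'
      (fun h => hyz (Relation.ReflTransGen.trans h (hzw'.symm' hs)))
    have e2 := agree z hz' w (hyw.mem hy') nzi hxw
      (fun h => hzy (Relation.ReflTransGen.trans h (hyw.symm' hs)))
    have e3 := Cn.module hs hn hz' hyz hyw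
    have e4 := Cn.module hs hn hy' hzy hzw'
    rw [← e1, ← e2, e3, e4, hs]

theorem gallai_conn (hs : ∀ u v, c u v = c v u) (hn : NR c) {i j k : K}
    (hij : i ≠ j) (hik : i ≠ k) (hjk : j ≠ k) : ∀ (n : ℕ) (S : Finset V), S.card = n + 2 →
    CutConn c i S → CutConn c j S → CutConn c k S → False := by
  intro n
  induction n with
  | zero =>
    intro S hS hi hj hk
    obtain ⟨x, y, hxy, rfl⟩ := Finset.card_eq_two.1 hS
    have key : ∀ i, CutConn c i {x, y} → c x y = i := by
      intro i hi
      obtain ⟨u, hu, v, hv, hvx, h⟩ := hi {x} (by simp) (by simp) (by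
        intro h
        have := congrArg Finset.card h
        rw [Finset.card_pair hxy] at this
        simp at this)
      simp at hu hv hvx
      subst hu
      rcases hv with rfl | rfl
      · exact absurd rfl hvx
      · exact h
    exact hij ((key i hi).symm.trans (key j hj))
  | succ n ih =>
    intro S hS hi hj hk
    have : S.Nonempty := Finset.card_pos.1 (by omega)
    obtain ⟨x, hx⟩ := this
    have hc : (S.erase x).card = n + 2 := by
      rw [Finset.card_erase_of_mem hx]; omega
    by_cases h1 : CutConn c i (S.erase x)
    · by_cases h2 : CutConn c j (S.erase x)
      · by_cases h3 : CutConn c k (S.erase x)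
        · exact ih _ hc h1 h2 h3
        · exact gallai_step hs hn hik.symm hjk.symm hij hx (by omega) hk hi hj h3
      · exact gallai_step hs hn hij.symm hjk hik hx (by omega) hj hi hk h2
    · exact gallai_step hs hn hij hik hjk hx (by omega) hi hj hk h1

theorem gallai (hs : ∀ u v, c u v = c v u) (hn : NR c) : ∀ (n : ℕ) (S : Finset V), S.card = n →
    2 ≤ n → ∃ (p : V → V) (a b : K), (∃ u ∈ S, ∃ v ∈ S, p u ≠ p v) ∧
      (∀ u ∈ S, ∀ u' ∈ S, ∀ v ∈ S, p u = p u' → p u ≠ p v → c u v = c u' v) ∧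
      (∀ u ∈ S, ∀ v ∈ S, p u ≠ p v → c u v = a ∨ c u v = b) := by
  intro n
  induction n using Nat.strong_induction_on with
  | _ n ih =>
  intro S hS h2
  obtain ⟨u0, hu0, v0, hv0, huv0⟩ := Finset.one_lt_card.1 (show 1 < S.card by omega)
  by_cases htc : ∃ a b, TC c a b S
  · obtain ⟨a, b, htc⟩ := htc
    refine ⟨id, a, b, ⟨u0, hu0, v0, hv0, huv0⟩, ?_, htc⟩
    rintro u _ u' _ v _ rfl _
    rfl
  · push Not at htc
    have : ∃ i, ¬ CutConn c i S ∧ ∃ u ∈ S, ∃ v ∈ S, u ≠ v ∧ c u v = i := by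
      have t1 := htc (c u0 v0) (c u0 v0)
      unfold TC at t1
      push Not at t1
      obtain ⟨u1, hu1, v1, hv1, huv1, n1, -⟩ := t1
      have t2 := htc (c u0 v0) (c u1 v1)
      unfold TC at t2
      push Not at t2
      obtain ⟨u2, hu2, v2, hv2, huv2, n2, n3⟩ := t2
      by_contra hcon
      push Not at hcon
      refine gallai_conn hs hn n1 n3.symm n2.symm (n - 2) S (by omega) ?_ ?_ ?_
      · by_contra h; exact hcon _ h u1 hu1 v1 hv1 huv1 rfl
      · by_contra h; exact hcon _ h u0 hu0 v0 hv0 huv0 rfl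
      · by_contra h; exact hcon _ h u2 hu2 v2 hv2 huv2 rfl
    obtain ⟨i, hni, u1, hu1, v1, hv1, huv1, hc1⟩ := this
    let st : Setoid V := ⟨Cn c i S, ⟨fun _ => Relation.ReflTransGen.refl,
      fun h => h.symm' hs, fun h h' => Relation.ReflTransGen.trans h h'⟩⟩
    let ρ : V → V := fun v => (Quotient.mk st v).out
    have hρ : ∀ v, Cn c i S (ρ v) v := fun v => Quotient.exact (s := st) (Quotient.out_eq _)
    have hρe : ∀ u v, Cn c i S u v → ρ u = ρ v := by
      intro u v h
      have : Quotient.mk st u = Quotient.mk st v := Quotient.sound h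
      simp only [ρ, this]
    have hρS : ∀ v ∈ S, ρ v ∈ S := fun v hv => ((hρ v).symm' hs).mem hv
    have hmod : ∀ u ∈ S, ∀ v ∈ S, ρ u ≠ ρ v → c u v = c (ρ u) (ρ v) := by
      intro u hu v hv huv
      have hnot : ¬ Cn c i S u v := fun h => huv (hρe u v h)
      have e1 : c v (ρ u) = c v u := Cn.module hs hn hv hnot ((hρ u).symm' hs)
      have e2 : c (ρ u) (ρ v) = c (ρ u) v := Cn.module hs hn (hρS u hu)
        (fun h => hnot (Cn.symm' hs (Relation.ReflTransGen.trans h (hρ u)))) ((hρ v).symm' hs)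
      rw [e2, hs (ρ u), e1, hs]
    have hlt : (S.image ρ).card < S.card := by
      refine lt_of_le_of_ne Finset.card_image_le fun h => ?_
      have := Finset.card_image_iff.1 h hu1 hv1
        (hρe _ _ (Relation.ReflTransGen.single ⟨hu1, hv1, huv1, hc1⟩))
      exact huv1 this
    have hge : 2 ≤ (S.image ρ).card := by
      obtain ⟨v, hv, huv⟩ := not_cutConn_reach hs hni u1 hu1
      refine Finset.one_lt_card.2 ⟨ρ u1, Finset.mem_image_of_mem _ hu1, ρ v,
        Finset.mem_image_of_mem _ hv, fun h => huv ?_⟩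
      have h1 := hρ u1
      have h2 := hρ v
      rw [← h] at h2
      exact Relation.ReflTransGen.trans (h1.symm' hs) h2
    obtain ⟨p, a, b, ⟨x, hx, y, hy, hxy⟩, hp1, hp2⟩ := ih _ (by omega) (S.image ρ) rfl hge
    have im : ∀ u ∈ S, ρ u ∈ S.image ρ := fun u hu => Finset.mem_image_of_mem _ hu
    refine ⟨p ∘ ρ, a, b, ?_, ?_, ?_⟩
    · obtain ⟨u, hu, rfl⟩ := Finset.mem_image.1 hx
      obtain ⟨v, hv, rfl⟩ := Finset.mem_image.1 hy
      exact ⟨u, hu, v, hv, hxy⟩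
    · intro u hu u' hu' v hv h1 h2
      simp only [Function.comp] at h1 h2
      rw [hmod u hu v hv (fun h => h2 (by rw [h])),
        hmod u' hu' v hv (fun h => h2 (by rw [h1, h]))]
      exact hp1 _ (im u hu) _ (im u' hu') _ (im v hv) h1 h2
    · intro u hu v hv h2
      simp only [Function.comp] at h2
      rw [hmod u hu v hv (fun h => h2 (by rw [h]))]
      exact hp2 _ (im u hu) _ (im v hv) h2

end

/-! The upper bound -/

def g : ℕ → ℕ
  | 0 => 1
  | 1 => 4
  | (n + 2) => 17 * g n

def h : ℕ → ℕ
  | 0 => 1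
  | 1 => 2
  | (n + 2) => 5 * h n

theorem h_bound : ∀ r, 1 ≤ h r ∧ 2 * h r ≤ h (r + 1) ∧ 2 * h (r + 1) ≤ 5 * h r
  | 0 => by decide
  | 1 => by decide
  | (n + 2) => by
    have h1 := h_bound n
    have h2 : h (n + 2) = 5 * h n := rfl
    have h3 : h (n + 2 + 1) = 5 * h (n + 1) := rfl
    omega

theorem g_bound : ∀ s, 1 ≤ g s ∧ 4 * g s ≤ g (s + 1)
  | 0 => by decide
  | 1 => by decide
  | (n + 2) => by
    have h1 := g_bound n
    have h2 : g (n + 2) = 17 * g n := rfl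
    have h3 : g (n + 2 + 1) = 17 * g (n + 1) := rfl
    omega

section
open Classical

variable {V K : Type} {c : V → V → K}

/-- colors of `A` have no `H1`, colors of `B` no triangle, other colors do not occur. -/
structure Good (c : V → V → K) (S : Finset V) (A B : Finset K) : Prop where
  disj : ∀ i ∈ A, i ∉ B
  col : ∀ u ∈ S, ∀ v ∈ S, u ≠ v → c u v ∈ A ∨ c u v ∈ B
  hA : ∀ i ∈ A, HF c i S
  hB : ∀ i ∈ B, Fr c i 2 S

def Bd (c : V → V → K) (X : Finset V) : Prop :=
  ∀ A B : Finset K, Good c X A B → X.card ≤ g A.card * h B.card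

theorem Good.mono {S X : Finset V} {A B : Finset K} (G : Good c S A B) (hX : X ⊆ S) :
    Good c X A B :=
  ⟨G.disj, fun u hu v hv => G.col u (hX hu) v (hX hv), fun i hi => (G.hA i hi).mono hX,
    fun i hi => (G.hB i hi).mono hX⟩

theorem Good.down10 (hs : ∀ u v, c u v = c v u) {S : Finset V} {A B : Finset K} {i : K}
    (G : Good c S A B) (h1 : Fr c i 1 S) : Good c S A (B.erase i) := by
  refine ⟨fun j hj h => G.disj j hj (Finset.mem_of_mem_erase h), ?_, G.hA,
    fun j hj => G.hB j (Finset.mem_of_mem_erase hj)⟩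
  intro u hu v hv huv
  rcases G.col u hu v hv huv with h | h
  · exact Or.inl h
  · exact Or.inr (Finset.mem_erase.2 ⟨Fr1_ne hs h1 hu hv huv, h⟩)

theorem Good.down20 (hs : ∀ u v, c u v = c v u) {S : Finset V} {A B : Finset K} {i : K}
    (G : Good c S A B) (h1 : Fr c i 1 S) : Good c S (A.erase i) B := by
  refine ⟨fun j hj => G.disj j (Finset.mem_of_mem_erase hj), ?_,
    fun j hj => G.hA j (Finset.mem_of_mem_erase hj), G.hB⟩
  intro u hu v hv huv
  rcases G.col u hu v hv huv with h | h
  · exact Or.inl (Finset.mem_erase.2 ⟨Fr1_ne hs h1 hu hv huv, h⟩)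
  · exact Or.inr h

theorem Good.down21 {S : Finset V} {A B : Finset K} {i : K}
    (G : Good c S A B) (h1 : Fr c i 2 S) : Good c S (A.erase i) (insert i B) := by
  refine ⟨fun j hj h => ?_, ?_,
    fun j hj => G.hA j (Finset.mem_of_mem_erase hj), ?_⟩
  · rw [Finset.mem_erase] at hj
    rw [Finset.mem_insert] at h
    rcases h with h | h
    · exact hj.1 h
    · exact G.disj j hj.2 h
  · intro u hu v hv huv
    by_cases e : c u v = i
    · exact Or.inr (by simp [e])
    rcases G.col u hu v hv huv with h | h
    · exact Or.inl (Finset.mem_erase.2 ⟨e, h⟩)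
    · exact Or.inr (Finset.mem_insert_of_mem h)
  · intro j hj
    rw [Finset.mem_insert] at hj
    rcases hj with rfl | hj
    · exact h1
    · exact G.hB j hj

theorem HF.fr3 {i : K} {S : Finset V} (hf : HF c i S) (hc : CutConn c i S) (h5 : 5 ≤ S.card) :
    Fr c i 3 S := by
  intro Q hQ hQc
  by_contra hcon
  obtain ⟨R, hR, hR4⟩ := Finset.exists_subset_card_eq (show 4 ≤ Q.card by omega)
  obtain ⟨u, hu, v, hv, hvR, huv⟩ := hc R (hR.trans hQ) (Finset.card_pos.1 (by omega)) (by
    rintro rfl; omega)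
  exact hf R (hR.trans hQ) (fun u hu v hv => hQc u (hR hu) v (hR hv)) hR4 u hu v hv hvR huv

theorem case1 (hs : ∀ u v, c u v = c v u) {S : Finset V} (ih : ∀ X, X ⊂ S → Bd c X)
    {A B : Finset K} (G : Good c S A B) {X : Finset V} (hX : X ⊆ S) (hne : X.Nonempty)
    (hXS : X ≠ S) {i : K} (hi : ∀ x ∈ X, ∀ y ∈ S, y ∉ X → c x y = i) :
    S.card ≤ g A.card * h B.card := by
  obtain ⟨x0, hx0⟩ := hne
  have : ∃ y ∈ S, y ∉ X := by
    by_contra hcon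
    push Not at hcon
    exact hXS (Finset.Subset.antisymm hX hcon)
  obtain ⟨y0, hy0, hy0X⟩ := this
  have hcard := Finset.card_sdiff_add_card_eq_card hX
  have hXss : X ⊂ S := Finset.ssubset_iff_subset_ne.2 ⟨hX, hXS⟩
  have hYs : S \ X ⊆ S := Finset.sdiff_subset
  have hYss : S \ X ⊂ S := by
    refine Finset.ssubset_iff_subset_ne.2 ⟨hYs, fun h => ?_⟩
    have := hX hx0
    rw [← h, Finset.mem_sdiff] at this
    exact this.2 hx0
  -- the two sides see each other in color i
  have jX : ∀ x ∈ X, x ≠ y0 ∧ c y0 x = i := fun x hx =>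
    ⟨by rintro rfl; exact hy0X hx, by rw [hs]; exact hi x hx y0 hy0 hy0X⟩
  have jY : ∀ x ∈ S \ X, x ≠ x0 ∧ c x0 x = i := fun x hx => by
    rw [Finset.mem_sdiff] at hx
    exact ⟨by rintro rfl; exact hx.2 hx0, hi x0 hx0 x hx.1 hx.2⟩
  have bX := ih X hXss
  have bY := ih _ hYss
  have GX := G.mono hX
  have GY := G.mono hYs
  have hxy : x0 ≠ y0 := by rintro rfl; exact hy0X hx0
  rcases G.col x0 (hX hx0) y0 hy0 hxy with hm | hm
  · rw [hi x0 hx0 y0 hy0 hy0X] at hm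
    obtain ⟨s, hsc⟩ : ∃ s, A.card = s + 1 :=
      ⟨A.card - 1, by have := Finset.card_pos.2 ⟨i, hm⟩; omega⟩
    have hAe : (A.erase i).card = s := by rw [Finset.card_erase_of_mem hm]; omega
    have hBi : (insert i B).card = B.card + 1 := Finset.card_insert_of_notMem (G.disj i hm)
    have gb := g_bound s
    have hb := h_bound B.card
    rw [hsc]
    by_cases h5 : S.card ≤ 4
    · nlinarith [gb.1, gb.2, hb.1]
    have hconn : CutConn c i S := by
      intro Q hQ hQne hQS
      by_contra hcon
      push Not at hcon
      have cl : ∀ u ∈ Q, ∀ v ∈ S, c u v = i → v ∈ Q := by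
        intro u hu v hv huv
        by_contra hvQ
        exact hcon u hu v hv hvQ huv
      have hx : x0 ∈ Q ∧ y0 ∈ Q := by
        obtain ⟨q, hq⟩ := hQne
        by_cases hqX : q ∈ X
        · have h1 := cl q hq y0 hy0 (hi q hqX y0 hy0 hy0X)
          exact ⟨cl y0 h1 x0 (hX hx0) (jX x0 hx0).2, h1⟩
        · have h1 := cl q hq x0 (hX hx0) (by rw [hs]; exact hi x0 hx0 q (hQ hq) hqX)
          exact ⟨h1, cl x0 h1 y0 hy0 (hi x0 hx0 y0 hy0 hy0X)⟩
      refine hQS (Finset.Subset.antisymm hQ fun v hv => ?_)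
      by_cases hvX : v ∈ X
      · exact cl y0 hx.2 v hv (jX v hvX).2
      · exact cl x0 hx.1 v hv (hi x0 hx0 v hv hvX)
    have f3 := (G.hA i hm).fr3 hconn (by omega)
    have fX := f3.join1 hs hX hy0 jX
    have fY := f3.join1 hs hYs (hX hx0) jY
    have b1 := bX _ _ (GX.down21 fX)
    have b2 := bY _ _ (GY.down21 fY)
    rw [hAe, hBi] at b1 b2
    have fin : 2 * (g s * h B.card + g s * h (B.card + 1)) ≤ 2 * (g (s + 1) * h B.card) := by
      have e1 : g s * (2 * h (B.card + 1)) ≤ g s * (5 * h B.card) := Nat.mul_le_mul_left _ hb.2.2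
      have e2 : 4 * g s * h B.card ≤ g (s + 1) * h B.card := Nat.mul_le_mul_right _ gb.2
      nlinarith
    by_cases hX1 : Fr c i 1 X
    · have b3 := bX _ _ (GX.down20 hs hX1)
      rw [hAe] at b3
      omega
    · obtain ⟨Q, hQ, hQc, hQ2⟩ := not_Fr1 hX1
      have hY1 : Fr c i 1 (S \ X) := f3.join hs (m := 1) (t := 2) hYs (hQ.trans hX) (by
        intro x hx y hy
        rw [Finset.mem_sdiff] at hx
        exact ⟨by rintro rfl; exact hx.2 (hQ hy), by rw [hs]; exact hi y (hQ hy) x hx.1 hx.2⟩)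
        hQc (by omega)
      have b3 := bY _ _ (GY.down20 hs hY1)
      rw [hAe] at b3
      omega
  · rw [hi x0 hx0 y0 hy0 hy0X] at hm
    have f2 := G.hB i hm
    have b1 := bX _ _ (GX.down10 hs (f2.join1 hs hX hy0 jX))
    have b2 := bY _ _ (GY.down10 hs (f2.join1 hs hYs (hX hx0) jY))
    obtain ⟨r, hrc⟩ : ∃ r, B.card = r + 1 :=
      ⟨B.card - 1, by have := Finset.card_pos.2 ⟨i, hm⟩; omega⟩
    have hBe : (B.erase i).card = r := by rw [Finset.card_erase_of_mem hm]; omega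
    rw [hBe] at b1 b2
    rw [hrc]
    have hb := Nat.mul_le_mul_left (g A.card) (h_bound r).2.1
    nlinarith

/-- a Gallai partition without a monochromatic cut. -/
structure Part (c : V → V → K) (S : Finset V) (p : V → V) (a b : K) : Prop where
  ne : ∃ u ∈ S, ∃ v ∈ S, p u ≠ p v
  p1 : ∀ u ∈ S, ∀ u' ∈ S, ∀ v ∈ S, p u = p u' → p u ≠ p v → c u v = c u' v
  p2 : ∀ u ∈ S, ∀ v ∈ S, p u ≠ p v → c u v = a ∨ c u v = b
  nocut : ∀ i X, X ⊆ S → X.Nonempty → X ≠ S → ∃ x ∈ X, ∃ y ∈ S, y ∉ X ∧ c x y ≠ i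

theorem Part.swap {S : Finset V} {p : V → V} {a b : K} (P : Part c S p a b) : Part c S p b a :=
  ⟨P.ne, P.p1, fun u hu v hv huv => (P.p2 u hu v hv huv).symm, P.nocut⟩

theorem Part.filter_ne {S : Finset V} {p : V → V} {a b : K} (P : Part c S p a b) (x : V) :
    S.filter (fun v => p v = x) ≠ S := by
  intro h
  rw [Finset.filter_eq_self] at h
  obtain ⟨u, hu, v, hv, huv⟩ := P.ne
  exact huv ((h u hu).trans (h v hv).symm)

theorem Part.filter_ssubset {S : Finset V} {p : V → V} {a b : K} (P : Part c S p a b) (x : V) :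
    S.filter (fun v => p v = x) ⊂ S :=
  Finset.ssubset_iff_subset_ne.2 ⟨Finset.filter_subset _ _, P.filter_ne x⟩

theorem Part.nbr {S : Finset V} {p : V → V} {a b : K} (P : Part c S p a b) {u : V} (hu : u ∈ S) :
    ∃ y ∈ S, p u ≠ p y ∧ c u y = a := by
  obtain ⟨x, hx, y, hy, hyX, hne⟩ := P.nocut b (S.filter (fun v => p v = p u))
    (Finset.filter_subset _ _) ⟨u, by simp [hu]⟩ (P.filter_ne _)
  rw [Finset.mem_filter] at hx hyX
  have hpy : p y ≠ p u := fun h => hyX ⟨hy, h⟩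
  refine ⟨y, hy, hpy.symm, ?_⟩
  rw [← P.p1 x hx.1 u hu y hy hx.2 (by rw [hx.2]; exact hpy.symm)]
  exact (P.p2 x hx.1 y hy (by rw [hx.2]; exact hpy.symm)).resolve_right hne

theorem Part.conn (hs : ∀ u v, c u v = c v u) {S : Finset V} {p : V → V} {a b : K}
    (P : Part c S p a b) : CutConn c a S := by
  intro Q hQ hne hQS
  by_contra hcon
  push Not at hcon
  have cl : ∀ u ∈ Q, ∀ v ∈ S, c u v = a → v ∈ Q := by
    intro u hu v hv huv
    by_contra hvQ
    exact hcon u hu v hv hvQ huv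
  obtain ⟨x, hx, y, hy, hyQ, hxy⟩ := P.nocut b Q hQ hne hQS
  by_cases hp : p x = p y
  · obtain ⟨z, hz, hpz, hxz⟩ := P.nbr (hQ hx)
    have hzQ := cl x hx z hz hxz
    have := P.p1 x (hQ hx) y hy z hz hp hpz
    exact hyQ (cl z hzQ y hy (by rw [hs, ← this]; exact hxz))
  · rcases P.p2 x (hQ hx) y hy hp with h | h
    · exact hyQ (cl x hx y hy h)
    · exact hxy h

theorem Part.fr (hs : ∀ u v, c u v = c v u) {S : Finset V} {p : V → V} {a b : K}
    (P : Part c S p a b) {m : ℕ} (hf : Fr c a (m + 1) S) (x : V) :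
    Fr c a m (S.filter (fun v => p v = x)) := by
  rcases (S.filter (fun v => p v = x)).eq_empty_or_nonempty with he | ⟨u, hu⟩
  · rw [he]
    intro Q hQ _
    rw [Finset.subset_empty.1 hQ]
    simp
  · rw [Finset.mem_filter] at hu
    obtain ⟨y, hy, hpy, huy⟩ := P.nbr hu.1
    refine hf.join1 hs (Finset.filter_subset _ _) hy ?_
    intro w hw
    rw [Finset.mem_filter] at hw
    have hpw : p w = p u := hw.2.trans hu.2.symm
    refine ⟨fun h => hpy (by rw [← hpw, h]), ?_⟩
    rw [hs, P.p1 w hw.1 u hu.1 y hy hpw (by rw [hpw]; exact hpy)]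
    exact huy

theorem Part.side (hs : ∀ u v, c u v = c v u) {S : Finset V} {p : V → V} {a b : K}
    (P : Part c S p a b) {m t : ℕ} (hf : Fr c a (m + t) S) {x : V} {Q T : Finset V} {u : V}
    (hQ : Q ⊆ S.filter (fun v => p v = x)) (hQc : Cl c a Q) (hQt : t ≤ Q.card)
    (hT : ∀ v ∈ T, v ∈ S ∧ p v ≠ x) (hu : u ∈ S) (hux : p u = x) :
    Fr c a m (T.filter (fun v => c u v = a)) := by
  refine hf.join hs (fun v hv => (hT v (Finset.mem_filter.1 hv).1).1)
    (hQ.trans (Finset.filter_subset _ _)) ?_ hQc hQt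
  intro w hw y hy
  rw [Finset.mem_filter] at hw
  have hy' := Finset.mem_filter.1 (hQ hy)
  have hw' := hT w hw.1
  refine ⟨fun h => hw'.2 (by rw [h]; exact hy'.2), ?_⟩
  rw [hs, P.p1 y hy'.1 u hu w hw'.1 (hy'.2.trans hux.symm) (by rw [hy'.2]; exact hw'.2.symm)]
  exact hw.2

theorem Part.side_split {S : Finset V} {p : V → V} {a b : K} (hab : a ≠ b)
    (P : Part c S p a b) {x : V} {T : Finset V} {u : V}
    (hT : ∀ v ∈ T, v ∈ S ∧ p v ≠ x) (hu : u ∈ S) (hux : p u = x) :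
    T.card = (T.filter (fun v => c u v = a)).card + (T.filter (fun v => c u v = b)).card := by
  rw [← Finset.card_filter_add_card_filter_not (s := T) (fun v => c u v = a)]
  congr 2
  apply Finset.filter_congr
  intro v hv
  have := P.p2 u hu v (hT v hv).1 (by rw [hux]; exact (hT v hv).2.symm)
  constructor
  · intro h; exact this.resolve_left h
  · intro h h'; exact hab (h'.symm.trans h)

theorem Part.tc {S : Finset V} {p : V → V} {a b : K}
    (P : Part c S p a b) {t : V → Finset V} {I : Finset V}
    (ht : ∀ x ∈ I, t x ⊆ S.filter (fun v => p v = x)) (htc : ∀ x ∈ I, TC c a b (t x)) :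
    TC c a b (I.biUnion t) := by
  intro u hu v hv huv
  rw [Finset.mem_biUnion] at hu hv
  obtain ⟨x, hx, hu⟩ := hu
  obtain ⟨y, hy, hv⟩ := hv
  have hu' := Finset.mem_filter.1 (ht x hx hu)
  have hv' := Finset.mem_filter.1 (ht y hy hv)
  by_cases hxy : x = y
  · subst hxy
    exact htc x hx u hu v hv huv
  · exact P.p2 u hu'.1 v hv'.1 (by rw [hu'.2, hv'.2]; exact hxy)

theorem tr_sub {S : Finset V} {p : V → V} {t : V → Finset V} {I : Finset V}
    (ht : ∀ x ∈ I, t x ⊆ S.filter (fun v => p v = x)) : I.biUnion t ⊆ S :=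
  Finset.biUnion_subset.2 fun x hx => (ht x hx).trans (Finset.filter_subset _ _)

theorem tr_card {S : Finset V} {p : V → V} {t : V → Finset V} {I : Finset V}
    (ht : ∀ x ∈ I, t x ⊆ S.filter (fun v => p v = x)) :
    (I.biUnion t).card = ∑ x ∈ I, (t x).card := by
  apply Finset.card_biUnion
  intro x hx y hy hxy
  rw [Function.onFun, Finset.disjoint_left]
  intro v hv hv'
  exact hxy ((Finset.mem_filter.1 (ht x hx hv)).2.symm.trans (Finset.mem_filter.1 (ht y hy hv')).2)

theorem Cl.tc {a b : K} {Q : Finset V} (h : Cl c a Q) : TC c a b Q :=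
  fun u hu v hv huv => Or.inl (h u hu v hv huv)

theorem part_sum (S : Finset V) (p : V → V) :
    S.card = ∑ x ∈ S.image p, (S.filter (fun v => p v = x)).card :=
  Finset.card_eq_sum_card_image p S

theorem part_pick {S : Finset V} {p : V → V} {x : V} (hx : x ∈ S.image p) :
    ∃ v, v ∈ S ∧ p v = x := by
  obtain ⟨v, hv, h⟩ := Finset.mem_image.1 hx
  exact ⟨v, hv, h⟩

theorem case33 (hs : ∀ u v, c u v = c v u) {S : Finset V} (ih : ∀ X, X ⊂ S → Bd c X)
    {A B : Finset K} (G : Good c S A B) {p : V → V} {a b : K} (hab : a ≠ b)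
    (P : Part c S p a b) (ha : a ∈ B) (hb : b ∈ B) : S.card ≤ g A.card * h B.card := by
  have fa := G.hB a ha
  have fb := G.hB b hb
  have hbe : b ∈ B.erase a := Finset.mem_erase.2 ⟨hab.symm, hb⟩
  obtain ⟨r, hr⟩ : ∃ r, B.card = r + 2 := ⟨B.card - 2, by
    have := Finset.one_lt_card.2 ⟨a, ha, b, hb, hab⟩; omega⟩
  have hBe : ((B.erase a).erase b).card = r := by
    rw [Finset.card_erase_of_mem hbe, Finset.card_erase_of_mem ha]; omega
  have hbd : ∀ x ∈ S.image p, (S.filter (fun v => p v = x)).card ≤ g A.card * h r := by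
    intro x _
    have := ih _ (P.filter_ssubset x) _ _
      (((G.mono (P.filter_ssubset x).subset).down10 hs (P.fr hs fa x)).down10 hs
        (P.swap.fr hs fb x))
    rwa [hBe] at this
  have : ∀ x, ∃ t : Finset V, x ∈ S.image p → t ⊆ S.filter (fun v => p v = x) ∧ Cl c a t ∧ t.card = 1 := by
    intro x
    by_cases hx : x ∈ S.image p
    · obtain ⟨v, hv, hvx⟩ := part_pick hx
      exact ⟨{v}, fun _ => ⟨by simp [hv, hvx], Cl.singleton _ _, by simp⟩⟩
    · exact ⟨∅, fun h => absurd h hx⟩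
  choose t ht using this
  have ht1 : ∀ x ∈ S.image p, t x ⊆ S.filter (fun v => p v = x) := fun x hx => (ht x hx).1
  have h5 := ram33 hs hab (P.tc ht1 fun x hx => (ht x hx).2.1.tc) (fa.mono (tr_sub ht1))
    (fb.mono (tr_sub ht1))
  rw [tr_card ht1, Finset.sum_congr rfl fun x hx => (ht x hx).2.2] at h5
  simp only [Finset.sum_const, smul_eq_mul, mul_one] at h5
  have hsum := Finset.sum_le_card_nsmul _ _ _ hbd
  rw [← part_sum, smul_eq_mul] at hsum
  rw [hr]
  have : h (r + 2) = 5 * h r := rfl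
  rw [this]
  calc S.card ≤ _ := hsum
    _ ≤ 5 * (g A.card * h r) := Nat.mul_le_mul_right _ h5
    _ = _ := by ring

theorem case34 [Fintype V] (hs : ∀ u v, c u v = c v u) {S : Finset V}
    (ih : ∀ X, X ⊂ S → Bd c X) (h5 : 5 ≤ S.card)
    {A B : Finset K} (G : Good c S A B) {p : V → V} {a b : K} (hab : a ≠ b)
    (P : Part c S p a b) (ha : a ∈ B) (hb : b ∈ A) : S.card ≤ g A.card * h B.card := by
  have fa := G.hB a ha
  have fb := (G.hA b hb).fr3 (P.swap.conn hs) h5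
  obtain ⟨r, hr⟩ : ∃ r, B.card = r + 1 := ⟨B.card - 1, by
    have := Finset.card_pos.2 ⟨a, ha⟩; omega⟩
  obtain ⟨s, hsc⟩ : ∃ s, A.card = s + 1 := ⟨A.card - 1, by
    have := Finset.card_pos.2 ⟨b, hb⟩; omega⟩
  have hBe : (B.erase a).card = r := by rw [Finset.card_erase_of_mem ha]; omega
  have hAe : (A.erase b).card = s := by rw [Finset.card_erase_of_mem hb]; omega
  have hBi : (insert b (B.erase a)).card = r + 1 := by
    rw [Finset.card_insert_of_notMem, hBe]
    intro h
    exact G.disj b hb (Finset.mem_of_mem_erase h)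
  have GP : ∀ x, Good c (S.filter (fun v => p v = x)) A (B.erase a) := fun x =>
    (G.mono (P.filter_ssubset x).subset).down10 hs (P.fr hs fa x)
  have hbd2 : ∀ x, (S.filter (fun v => p v = x)).card ≤ g s * h (r + 1) := by
    intro x
    have := ih _ (P.filter_ssubset x) _ _ ((GP x).down21 (P.swap.fr hs fb x))
    rwa [hAe, hBi] at this
  have hbd1 : ∀ x, Fr c b 1 (S.filter (fun v => p v = x)) →
      (S.filter (fun v => p v = x)).card ≤ g s * h r := by
    intro x hx
    have := ih _ (P.filter_ssubset x) _ _ ((GP x).down20 hs hx)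
    rwa [hAe, hBe] at this
  have hb' : 2 * (g s * h r) ≤ g s * h (r + 1) := by
    have := Nat.mul_le_mul_left (g s) (h_bound r).2.1
    nlinarith
  have : ∀ x, ∃ t : Finset V, x ∈ S.image p → t ⊆ S.filter (fun v => p v = x) ∧ Cl c b t ∧
      2 * (S.filter (fun v => p v = x)).card ≤ (g s * h (r + 1)) * t.card := by
    intro x
    by_cases hx : x ∈ S.image p
    · by_cases h1 : Fr c b 1 (S.filter (fun v => p v = x))
      · obtain ⟨v, hv, hvx⟩ := part_pick hx
        refine ⟨{v}, fun _ => ⟨by simp [hv, hvx], Cl.singleton _ _, ?_⟩⟩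
        have := hbd1 x h1
        rw [Finset.card_singleton]
        omega
      · obtain ⟨Q, hQ, hQc, hQ2⟩ := not_Fr1 h1
        refine ⟨Q, fun _ => ⟨hQ, hQc, ?_⟩⟩
        have := hbd2 x
        rw [hQ2]
        omega
    · exact ⟨∅, fun h => absurd h hx⟩
  choose t ht using this
  have ht1 : ∀ x ∈ S.image p, t x ⊆ S.filter (fun v => p v = x) := fun x hx => (ht x hx).1
  have h8 := ram34 hs hab (P.tc ht1 fun x hx => (ht x hx).2.1.tc.swap) (fa.mono (tr_sub ht1))
    (fb.mono (tr_sub ht1))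
  rw [tr_card ht1] at h8
  have hsum := Finset.sum_le_sum fun x hx => (ht x hx).2.2
  rw [← Finset.mul_sum, ← Finset.mul_sum, ← part_sum] at hsum
  rw [hr, hsc]
  have e1 := Nat.mul_le_mul_left (g s * h (r + 1)) h8
  have e2 := Nat.mul_le_mul_right (h (r + 1)) (g_bound s).2
  nlinarith

theorem case44 [Fintype V] (hs : ∀ u v, c u v = c v u) {S : Finset V}
    (ih : ∀ X, X ⊂ S → Bd c X) (h5 : 5 ≤ S.card)
    {A B : Finset K} (G : Good c S A B) {p : V → V} {a b : K} (hab : a ≠ b)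
    (P : Part c S p a b) (ha : a ∈ A) (hb : b ∈ A) : S.card ≤ g A.card * h B.card := by
  have fa := (G.hA a ha).fr3 (P.conn hs) h5
  have fb := (G.hA b hb).fr3 (P.swap.conn hs) h5
  have hbe : b ∈ A.erase a := Finset.mem_erase.2 ⟨hab.symm, hb⟩
  have hae : a ∈ A.erase b := Finset.mem_erase.2 ⟨hab, ha⟩
  obtain ⟨s, hsc⟩ : ∃ s, A.card = s + 2 := ⟨A.card - 2, by
    have := Finset.one_lt_card.2 ⟨a, ha, b, hb, hab⟩; omega⟩
  generalize hr : B.card = r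
  have hAe : ((A.erase a).erase b).card = s := by
    rw [Finset.card_erase_of_mem hbe, Finset.card_erase_of_mem ha]; omega
  have hAe' : ((A.erase b).erase a).card = s := by
    rw [Finset.card_erase_of_mem hae, Finset.card_erase_of_mem hb]; omega
  have hBa : (insert a B).card = r + 1 := by
    rw [Finset.card_insert_of_notMem (G.disj a ha), hr]
  have hBb : (insert b B).card = r + 1 := by
    rw [Finset.card_insert_of_notMem (G.disj b hb), hr]
  have hBab : (insert b (insert a B)).card = r + 2 := by
    rw [Finset.card_insert_of_notMem, hBa]
    rw [Finset.mem_insert]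
    rintro (h | h)
    · exact hab h.symm
    · exact G.disj b hb h
  have GP : ∀ x, Good c (S.filter (fun v => p v = x)) A B := fun x =>
    (G.mono (P.filter_ssubset x).subset)
  have fPa := fun x => P.fr hs (m := 2) fa x
  have fPb := fun x => P.swap.fr hs (m := 2) fb x
  generalize hX0 : g s * h r = X0
  have hX1 : 2 * (g s * h (r + 1)) ≤ 5 * X0 := by
    have := Nat.mul_le_mul_left (g s) (h_bound r).2.2
    rw [← hX0]
    nlinarith
  have hbd3 : ∀ x, (S.filter (fun v => p v = x)).card ≤ 5 * X0 := by
    intro x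
    have := ih _ (P.filter_ssubset x) _ _ (((GP x).down21 (fPa x)).down21 (fPb x))
    rw [hAe, hBab] at this
    have e : h (r + 2) = 5 * h r := rfl
    rw [e] at this
    rw [← hX0]
    linarith
  have hbda : ∀ x, Fr c a 1 (S.filter (fun v => p v = x)) →
      2 * (S.filter (fun v => p v = x)).card ≤ 5 * X0 := by
    intro x hx
    have := ih _ (P.filter_ssubset x) _ _ (((GP x).down20 hs hx).down21 (fPb x))
    rw [hAe, hBb] at this
    omega
  have hbdb : ∀ x, Fr c b 1 (S.filter (fun v => p v = x)) →
      2 * (S.filter (fun v => p v = x)).card ≤ 5 * X0 := by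
    intro x hx
    have := ih _ (P.filter_ssubset x) _ _ (((GP x).down20 hs hx).down21 (fPa x))
    rw [hAe', hBa] at this
    omega
  have hbd0 : ∀ x, Fr c a 1 (S.filter (fun v => p v = x)) →
      Fr c b 1 (S.filter (fun v => p v = x)) →
      (S.filter (fun v => p v = x)).card ≤ X0 := by
    intro x hx hx'
    have := ih _ (P.filter_ssubset x) _ _ (((GP x).down20 hs hx).down20 hs hx')
    rwa [hAe, hr, hX0] at this
  have : ∀ x, ∃ t : Finset V, x ∈ S.image p → t ⊆ S.filter (fun v => p v = x) ∧ TC c a b t ∧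
      ((t.card = 1 ∧ (S.filter (fun v => p v = x)).card ≤ X0) ∨
       (t.card = 2 ∧ (Cl c a t ∨ Cl c b t))) := by
    intro x
    by_cases hx : x ∈ S.image p
    · by_cases h1 : Fr c a 1 (S.filter (fun v => p v = x))
      · by_cases h2 : Fr c b 1 (S.filter (fun v => p v = x))
        · obtain ⟨v, hv, hvx⟩ := part_pick hx
          exact ⟨{v}, fun _ => ⟨by simp [hv, hvx], (Cl.singleton _ _).tc,
            Or.inl ⟨by simp, hbd0 x h1 h2⟩⟩⟩
        · obtain ⟨Q, hQ, hQc, hQ2⟩ := not_Fr1 h2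
          exact ⟨Q, fun _ => ⟨hQ, hQc.tc.swap, Or.inr ⟨hQ2, Or.inr hQc⟩⟩⟩
      · obtain ⟨Q, hQ, hQc, hQ2⟩ := not_Fr1 h1
        exact ⟨Q, fun _ => ⟨hQ, hQc.tc, Or.inr ⟨hQ2, Or.inl hQc⟩⟩⟩
    · exact ⟨∅, fun h => absurd h hx⟩
  choose t ht using this
  have ht1 : ∀ x ∈ S.image p, t x ⊆ S.filter (fun v => p v = x) := fun x hx => (ht x hx).1
  have htc := P.tc ht1 fun x hx => (ht x hx).2.1
  have hTS := tr_sub ht1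
  have h17 := ram44 hs hab htc (fa.mono hTS) (fb.mono hTS)
  rw [hsc]
  have e : g (s + 2) = 17 * g s := rfl
  rw [e, mul_assoc, hX0]
  have bnd : ∀ x ∈ S.image p, (Fr c a 1 (S.filter (fun v => p v = x)) ∨
      Fr c b 1 (S.filter (fun v => p v = x))) →
      4 * (S.filter (fun v => p v = x)).card ≤ 5 * X0 * (t x).card := by
    intro x hx hor
    rcases (ht x hx).2.2 with ⟨h1, h2⟩ | ⟨h1, -⟩
    · rw [h1]; omega
    · rw [h1]
      rcases hor with h | h
      · have := hbda x h; omega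
      · have := hbdb x h; omega
  -- the vertices of the transversal outside the part `x`
  have hout : ∀ x, ∀ v ∈ ((S.image p).erase x).biUnion t, v ∈ S ∧ p v ≠ x := by
    intro x v hv
    obtain ⟨y, hy, hv⟩ := Finset.mem_biUnion.1 hv
    rw [Finset.mem_erase] at hy
    have := Finset.mem_filter.1 (ht1 y hy.2 hv)
    exact ⟨this.1, by rw [this.2]; exact hy.1⟩
  have htc' : ∀ x, TC c a b (((S.image p).erase x).biUnion t) := fun x =>
    htc.mono (Finset.biUnion_subset_biUnion_of_subset_left _ (Finset.erase_subset _ _))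
  have hS' : ∀ x, ((S.image p).erase x).biUnion t ⊆ S := fun x v hv => (hout x v hv).1
  have hcard' : ∀ x ∈ S.image p, ∑ y ∈ S.image p, (t y).card =
      (t x).card + (((S.image p).erase x).biUnion t).card := by
    intro x hx
    rw [tr_card fun y hy => ht1 y (Finset.mem_of_mem_erase hy), Finset.add_sum_erase _ (fun y => (t y).card) hx]
  by_cases hD : ∃ x ∈ S.image p, ¬ Fr c a 1 (S.filter (fun v => p v = x)) ∧
      ¬ Fr c b 1 (S.filter (fun v => p v = x))
  · obtain ⟨x, hx, hxa, hxb⟩ := hD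
    obtain ⟨Qa, hQa, hQac, hQa2⟩ := not_Fr1 hxa
    obtain ⟨Qb, hQb, hQbc, hQb2⟩ := not_Fr1 hxb
    obtain ⟨u, hu, hux⟩ := part_pick hx
    have s0 := P.side_split hab (hout x) hu hux
    have s1 := ram1 hs (m := 3) ((htc' x).mono (Finset.filter_subset _ _))
      (P.side hs (m := 1) (t := 2) fa hQa hQac hQa2.ge (hout x) hu hux)
      (fb.mono ((Finset.filter_subset _ _).trans (hS' x)))
    have s2 := ram1 hs (m := 3) ((htc' x).swap.mono (Finset.filter_subset _ _))
      (P.swap.side hs (m := 1) (t := 2) fb hQb hQbc hQb2.ge (hout x) hu hux)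
      (fa.mono ((Finset.filter_subset _ _).trans (hS' x)))
    have hle : ∀ y ∈ (S.image p).erase x,
        4 * (S.filter (fun v => p v = y)).card ≤ 5 * X0 * (t y).card := by
      intro y hy
      rw [Finset.mem_erase] at hy
      apply bnd y hy.2
      obtain ⟨w, hw, hwy⟩ := part_pick hy.2
      have hTy : ∀ v ∈ S.filter (fun v => p v = y), v ∈ S ∧ p v ≠ x := by
        intro v hv
        rw [Finset.mem_filter] at hv
        exact ⟨hv.1, by rw [hv.2]; exact hy.1⟩
      have hall : ∀ i, c u w = i → (S.filter (fun v => p v = y)).filter (fun v => c u v = i) =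
          S.filter (fun v => p v = y) := by
        intro i hi
        rw [Finset.filter_eq_self]
        intro v hv
        rw [Finset.mem_filter] at hv
        rw [hs, P.p1 v hv.1 w hw u hu (hv.2.trans hwy.symm) (by rw [hv.2, hux]; exact hy.1), hs]
        exact hi
      rcases P.p2 u hu w hw (by rw [hux, hwy]; exact hy.1.symm) with h | h
      · left
        rw [← hall a h]
        exact P.side hs (m := 1) (t := 2) fa hQa hQac hQa2.ge hTy hu hux
      · right
        rw [← hall b h]
        exact P.swap.side hs (m := 1) (t := 2) fb hQb hQbc hQb2.ge hTy hu hux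
    have hsum := Finset.sum_le_sum hle
    rw [← Finset.mul_sum, ← Finset.mul_sum,
      ← tr_card fun y hy => ht1 y (Finset.mem_of_mem_erase hy)] at hsum
    have htot := part_sum S p
    rw [← Finset.add_sum_erase _ _ hx] at htot
    have h3 := hbd3 x
    have h6 := Nat.mul_le_mul_left (5 * X0)
      (show (((S.image p).erase x).biUnion t).card ≤ 6 by omega)
    omega
  · push Not at hD
    by_cases hM : ∃ x ∈ S.image p, (t x).card = 2 ∧ (Cl c a (t x) ∨ Cl c b (t x))
    · obtain ⟨x, hx, hx2, hxc⟩ := hM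
      have h13 : ∑ y ∈ S.image p, (t y).card ≤ 13 := by
        rw [hcard' x hx, hx2]
        obtain ⟨u, hu, hux⟩ := part_pick hx
        have s0 := P.side_split hab (hout x) hu hux
        have hu1 : ({u} : Finset V) ⊆ S.filter (fun v => p v = x) := by simp [hu, hux]
        rcases hxc with hxc | hxc
        · have s1 := ram1 hs (m := 3) ((htc' x).mono (Finset.filter_subset _ _))
            (P.side hs (m := 1) (t := 2) fa (ht1 x hx) hxc hx2.ge (hout x) hu hux)
            (fb.mono ((Finset.filter_subset _ _).trans (hS' x)))
          have s2 := ram34 hs hab.symm ((htc' x).swap.mono (Finset.filter_subset _ _))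
            (P.swap.side hs (m := 2) (t := 1) fb hu1 (Cl.singleton _ _) (by simp) (hout x) hu hux)
            (fa.mono ((Finset.filter_subset _ _).trans (hS' x)))
          omega
        · have s1 := ram1 hs (m := 3) ((htc' x).swap.mono (Finset.filter_subset _ _))
            (P.swap.side hs (m := 1) (t := 2) fb (ht1 x hx) hxc hx2.ge (hout x) hu hux)
            (fa.mono ((Finset.filter_subset _ _).trans (hS' x)))
          have s2 := ram34 hs hab ((htc' x).mono (Finset.filter_subset _ _))
            (P.side hs (m := 2) (t := 1) fa hu1 (Cl.singleton _ _) (by simp) (hout x) hu hux)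
            (fb.mono ((Finset.filter_subset _ _).trans (hS' x)))
          omega
      have hsum := Finset.sum_le_sum fun y hy => bnd y hy (by
        by_contra hcon
        push Not at hcon
        exact hcon.2 (hD y hy hcon.1))
      rw [← Finset.mul_sum, ← Finset.mul_sum, ← part_sum] at hsum
      have h6 := Nat.mul_le_mul_left (5 * X0) h13
      omega
    · have hall : ∀ x ∈ S.image p, (S.filter (fun v => p v = x)).card ≤ X0 * (t x).card := by
        intro x hx
        rcases (ht x hx).2.2 with ⟨h1, h2⟩ | h2
        · rw [h1]; omega
        · exact absurd ⟨x, hx, h2⟩ hM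
      have hsum := Finset.sum_le_sum hall
      rw [← Finset.mul_sum, ← part_sum, ← tr_card ht1] at hsum
      have h6 := Nat.mul_le_mul_left X0 h17
      omega

theorem g_pos' (s r : ℕ) : 1 ≤ g s * h r := Nat.mul_pos (g_bound s).1 (h_bound r).1

theorem upper [Fintype V] (hs : ∀ u v, c u v = c v u) (hn : NR c) (S : Finset V) : Bd c S := by
  induction S using Finset.strongInduction with
  | H S ih =>
  intro A B G
  by_cases h2 : S.card < 2
  · have := g_pos' A.card B.card
    omega
  obtain ⟨p, a, b, hne, hp1, hp2⟩ := gallai hs hn _ S rfl (by omega)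
  by_cases hcut : ∃ i X, X ⊆ S ∧ X.Nonempty ∧ X ≠ S ∧ ∀ x ∈ X, ∀ y ∈ S, y ∉ X → c x y = i
  · obtain ⟨i, X, h1, h2, h3, h4⟩ := hcut
    exact case1 hs ih G h1 h2 h3 h4
  · have P : Part c S p a b := by
      refine ⟨hne, hp1, hp2, ?_⟩
      push Not at hcut
      exact hcut
    obtain ⟨u, hu, -⟩ := hne
    obtain ⟨y, hy, hpy, huy⟩ := P.nbr hu
    obtain ⟨z, hz, hpz, huz⟩ := P.swap.nbr hu
    have hab : a ≠ b := by
      rintro rfl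
      obtain ⟨x, hx, w, hw, hwX, hxw⟩ := P.nocut a
        (S.filter (fun v => p v = p u)) (Finset.filter_subset _ _) ⟨u, Finset.mem_filter.2 ⟨hu, rfl⟩⟩ (P.filter_ne (p u))
      rw [Finset.mem_filter] at hx hwX
      have := P.p2 x hx.1 w hw (fun h => hwX ⟨hw, h.symm.trans hx.2⟩)
      tauto
    have ha := G.col u hu y hy (fun h => hpy (by rw [h]))
    have hb := G.col u hu z hz (fun h => hpz (by rw [h]))
    rw [huy] at ha
    rw [huz] at hb
    have small : (a ∈ A ∨ b ∈ A) → S.card ≤ 4 → S.card ≤ g A.card * h B.card := by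
      intro hor h4
      obtain ⟨s, hsc⟩ : ∃ s, A.card = s + 1 := ⟨A.card - 1, by
        have : 0 < A.card := by
          rcases hor with h | h
          · exact Finset.card_pos.2 ⟨a, h⟩
          · exact Finset.card_pos.2 ⟨b, h⟩
        omega⟩
      rw [hsc]
      nlinarith [g_bound s, h_bound B.card, (g_bound s).1, (g_bound s).2, (h_bound B.card).1]
    by_cases h4 : (a ∈ A ∨ b ∈ A) ∧ S.card ≤ 4
    · exact small h4.1 h4.2
    rcases ha with ha | ha <;> rcases hb with hb | hb
    · exact case44 hs ih (by by_contra h; exact h4 ⟨Or.inl ha, by omega⟩) G hab P ha hb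
    · exact case34 hs ih (by by_contra h; exact h4 ⟨Or.inl ha, by omega⟩) G hab.symm P.swap hb ha
    · exact case34 hs ih (by by_contra h; exact h4 ⟨Or.inr hb, by omega⟩) G hab P ha hb
    · exact case33 hs ih G hab P ha hb

end

/-! Copies of `H1` -/

theorem adj_all {V K : Type} {c : V → V → K} {i : K} {f : Fin 5 → V}
    (hf : ∀ a b, GH1.Adj a b → c (f a) (f b) = i) :
    (∀ a b : Fin 5, a ≠ 4 → b ≠ 4 → a ≠ b → c (f a) (f b) = i) ∧ c (f 3) (f 4) = i := by
  refine ⟨fun a b ha hb hab => hf a b ?_, hf 3 4 ?_⟩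
  · rw [GH1, SimpleGraph.fromRel_adj]
    exact ⟨hab, Or.inl (Or.inl ⟨ha, hb⟩)⟩
  · rw [GH1, SimpleGraph.fromRel_adj]
    decide

theorem copy_of {n k : ℕ} {c : Fin n → Fin n → Fin k} (hs : ∀ u v, c u v = c v u) {i : Fin k}
    {Q : Finset (Fin n)} (hQ : Cl c i Q) (h4 : Q.card = 4) {u v : Fin n} (hu : u ∈ Q)
    (hv : v ∉ Q) (huv : c u v = i) : HasMonoCopy GH1 c i := by
  have h3 : (Q.erase u).card = 3 := by rw [Finset.card_erase_of_mem hu, h4]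
  obtain ⟨x, y, z, hxy, hxz, hyz, he⟩ := Finset.card_eq_three.1 h3
  have mx : x ∈ Q.erase u := by rw [he]; simp
  have my : y ∈ Q.erase u := by rw [he]; simp
  have mz : z ∈ Q.erase u := by rw [he]; simp
  rw [Finset.mem_erase] at mx my mz
  have nx : x ≠ v := fun h => hv (h ▸ mx.2)
  have ny : y ≠ v := fun h => hv (h ▸ my.2)
  have nz : z ≠ v := fun h => hv (h ▸ mz.2)
  have nu : u ≠ v := fun h => hv (h ▸ hu)
  have hinj : Function.Injective ![x, y, z, u, v] := by
    intro a b hab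
    fin_cases a <;> fin_cases b <;> simp_all
  refine ⟨![x, y, z, u, v], hinj, ?_⟩
  have hmem : ∀ a : Fin 5, a ≠ 4 → (![x, y, z, u, v] : Fin 5 → Fin n) a ∈ Q := by
    intro a ha
    fin_cases a <;> simp_all
  intro a b hab
  rw [GH1, SimpleGraph.fromRel_adj] at hab
  obtain ⟨hne, (⟨ha, hb⟩ | ⟨rfl, rfl⟩) | (⟨hb, ha⟩ | ⟨rfl, rfl⟩)⟩ := hab
  · exact hQ _ (hmem a ha) _ (hmem b hb) (fun h => hne (hinj h))
  · exact huv
  · exact hQ _ (hmem a ha) _ (hmem b hb) (fun h => hne (hinj h))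
  · rw [hs]; exact huv

theorem upper_final {k : ℕ} (c : Fin (g k + 1) → Fin (g k + 1) → Fin k)
    (hc : IsGallaiColoring c) : ∃ i, HasMonoCopy GH1 c i := by
  by_contra hcon
  push Not at hcon
  have hn : NR c := by
    intro u v w h1 h2 h3
    by_contra hno
    push Not at hno
    exact hc.2 ⟨u, v, w, h1, h2, h3, hno⟩
  have := upper hc.1 hn Finset.univ Finset.univ ∅
    ⟨by simp, by simp, fun i _ Q _ hQ h4 u hu v _ hv huv =>
      hcon i (copy_of hc.1 hQ h4 hu hv huv), by simp⟩
  simp [h] at this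

/-! The lower bound -/

/-- there is a good coloring of `V` by `K`. -/
def Low (V K : Type) : Prop :=
  ∃ c : V → V → K, (∀ u v, c u v = c v u) ∧ NR c ∧
    ∀ i (f : Fin 5 → V), Function.Injective f → ¬ ∀ a b, GH1.Adj a b → c (f a) (f b) = i

theorem Low.transport {V K W L : Type} (H : Low V K) {e : W → V} (he : Function.Injective e)
    {φ : K → L} (hφ : Function.Injective φ) : Low W L := by
  obtain ⟨c, hs, hn, hf⟩ := H
  refine ⟨fun u v => φ (c (e u) (e v)), fun u v => congrArg φ (hs _ _), ?_, ?_⟩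
  · intro u v w h1 h2 h3
    simp only [hφ.eq_iff]
    exact hn _ _ _ (he.ne h1) (he.ne h2) (he.ne h3)
  · intro i f hfi hall
    have := (adj_all (c := fun u v => φ (c (e u) (e v))) hall).2
    refine hf (c (e (f 3)) (e (f 4))) (e ∘ f) (he.comp hfi) fun a b hab => hφ ?_
    rw [this]
    exact hall a b hab

def pq (d : Fin 17) : Fin 2 :=
  if d = 1 ∨ d = 2 ∨ d = 4 ∨ d = 8 ∨ d = 9 ∨ d = 13 ∨ d = 15 ∨ d = 16 then 0 else 1

def pal (x y : Fin 17) : Fin 2 := pq (x - y)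

theorem pq_neg : ∀ d, pq (-d) = pq d := by decide +kernel

theorem pal_symm (x y : Fin 17) : pal x y = pal y x := by
  unfold pal
  rw [← pq_neg, neg_sub]

theorem pq_k4 : ∀ i, ∀ a, a ≠ 0 → pq a = i → ∀ b, b ≠ 0 → pq b = i → a ≠ b → pq (a - b) = i →
    ∀ d, d ≠ 0 → pq d = i → a ≠ d → b ≠ d → pq (a - d) = i → pq (b - d) ≠ i := by
  decide +kernel

theorem pal_k4 {i : Fin 2} {x y z u : Fin 17} (h1 : x ≠ y) (h2 : x ≠ z) (h3 : x ≠ u) (h4 : y ≠ z)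
    (h5 : y ≠ u) (h6 : z ≠ u) (e1 : pal x y = i) (e2 : pal x z = i) (e3 : pal x u = i)
    (e4 : pal y z = i) (e5 : pal y u = i) (e6 : pal z u = i) : False := by
  refine pq_k4 i (x - u) (sub_ne_zero.2 h3) e3 (y - u) (sub_ne_zero.2 h5) e5 ?_ ?_
    (z - u) (sub_ne_zero.2 h6) e6 ?_ ?_ ?_ ?_
  · exact fun h => h1 (sub_left_injective h)
  · rw [sub_sub_sub_cancel_right]; exact e1
  · exact fun h => h2 (sub_left_injective h)
  · exact fun h => h4 (sub_left_injective h)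
  · rw [sub_sub_sub_cancel_right]; exact e2
  · rw [sub_sub_sub_cancel_right]; exact e4

theorem two_pigeon : ∀ a b d : Fin 2, a = b ∨ a = d ∨ b = d := by decide

theorem low_one : Low (Fin 4) (Fin 1) := by
  refine ⟨fun _ _ => 0, fun _ _ => rfl, fun _ _ _ _ _ _ => Or.inl rfl, ?_⟩
  intro i f hf
  have := Fintype.card_le_of_injective f hf
  simp at this

theorem low_two : Low (Fin 17) (Fin 2) := by
  refine ⟨pal, pal_symm, fun _ _ _ _ _ _ => two_pigeon _ _ _, ?_⟩
  intro i f hf hall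
  have hd := (adj_all hall).1
  have hne : ∀ a b : Fin 5, a ≠ b → f a ≠ f b := fun a b h => hf.ne h
  exact pal_k4 (hne 0 1 (by decide)) (hne 0 2 (by decide)) (hne 0 3 (by decide))
    (hne 1 2 (by decide)) (hne 1 3 (by decide)) (hne 2 3 (by decide))
    (hd 0 1 (by decide) (by decide) (by decide)) (hd 0 2 (by decide) (by decide) (by decide))
    (hd 0 3 (by decide) (by decide) (by decide)) (hd 1 2 (by decide) (by decide) (by decide))
    (hd 1 3 (by decide) (by decide) (by decide)) (hd 2 3 (by decide) (by decide) (by decide))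

theorem Low.prod {V K : Type} (H : Low V K) : Low (Fin 17 × V) (Fin 2 ⊕ K) := by
  obtain ⟨c, hs, hn, hf⟩ := H
  refine ⟨fun p q => if p.1 = q.1 then Sum.inr (c p.2 q.2) else Sum.inl (pal p.1 q.1), ?_, ?_, ?_⟩
  · intro p q
    by_cases h : p.1 = q.1
    · simp [h, hs p.2]
    · simp [h, Ne.symm h, pal_symm p.1]
  · rintro ⟨x, u⟩ ⟨y, v⟩ ⟨z, w⟩ h1 h2 h3
    by_cases e1 : x = y
    · subst e1
      by_cases e2 : x = z
      · subst e2
        simp only [if_true, Sum.inr.injEq]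
        exact hn u v w (fun h => h1 (by rw [h])) (fun h => h2 (by rw [h])) (fun h => h3 (by rw [h]))
      · right; right
        simp [e2]
    · by_cases e2 : x = z
      · subst e2
        right; left
        simp [e1, Ne.symm e1, pal_symm x]
      · by_cases e3 : y = z
        · subst e3
          left
          simp [e1]
        · simp only [e1, e2, e3, if_false, Sum.inl.injEq]
          exact two_pigeon _ _ _
  · intro i f hfi hall
    obtain ⟨hd, h34⟩ := adj_all (c := fun p q : Fin 17 × V =>
      if p.1 = q.1 then (Sum.inr (c p.2 q.2) : Fin 2 ⊕ K) else Sum.inl (pal p.1 q.1)) hall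
    rcases i with i | i
    · have key : ∀ a b : Fin 5, a ≠ 4 → b ≠ 4 → a ≠ b →
          (f a).1 ≠ (f b).1 ∧ pal (f a).1 (f b).1 = i := by
        intro a b ha hb hab
        have := hd a b ha hb hab
        by_cases h : (f a).1 = (f b).1
        · simp [h] at this
        · simp only [h, if_false, Sum.inl.injEq] at this
          exact ⟨h, this⟩
      have k01 := key 0 1 (by decide) (by decide) (by decide)
      have k02 := key 0 2 (by decide) (by decide) (by decide)
      have k03 := key 0 3 (by decide) (by decide) (by decide)
      have k12 := key 1 2 (by decide) (by decide) (by decide)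
      have k13 := key 1 3 (by decide) (by decide) (by decide)
      have k23 := key 2 3 (by decide) (by decide) (by decide)
      exact pal_k4 k01.1 k02.1 k03.1 k12.1 k13.1 k23.1 k01.2 k02.2 k03.2 k12.2 k13.2 k23.2
    · have same : ∀ a b : Fin 5, GH1.Adj a b → (f a).1 = (f b).1 ∧ c (f a).2 (f b).2 = i := by
        intro a b hab
        have := hall a b hab
        by_cases h : (f a).1 = (f b).1
        · simp only [h, if_true, Sum.inr.injEq] at this
          exact ⟨h, this⟩
        · simp [h] at this
      have s3 : ∀ a : Fin 5, (f a).1 = (f 3).1 := by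
        intro a
        by_cases h : a = 3
        · rw [h]
        · refine (same a 3 ?_).1
          rw [GH1, SimpleGraph.fromRel_adj]
          revert a
          decide
      refine hf i (fun a => (f a).2) ?_ fun a b hab => (same a b hab).2
      intro a b hab
      exact hfi (Prod.ext ((s3 a).trans (s3 b).symm) hab)

theorem low_all : ∀ k, Low (Fin (g (k + 1))) (Fin (k + 1))
  | 0 => low_one
  | 1 => low_two
  | (k + 2) => by
    refine (low_all k).prod.transport (e := finProdFinEquiv.symm) (Equiv.injective _)
      (φ := fun x => Fin.cast (by omega) (finSumFinEquiv x)) ?_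
    exact (Fin.cast_injective _).comp (Equiv.injective _)

theorem GR_eq (k : ℕ) (hk : 1 ≤ k) : GR k (fun _ => ⟨Fin 5, GH1⟩) = g k + 1 := by
  apply IsLeast.csInf_eq
  refine ⟨upper_final, ?_⟩
  intro n hn
  by_contra hlt
  obtain ⟨m, rfl⟩ : ∃ m, k = m + 1 := ⟨k - 1, by omega⟩
  have hle : n ≤ g (m + 1) := by omega
  obtain ⟨c, hs, hnr, hf⟩ := (low_all m).transport (Fin.castLE_injective hle)
    (φ := (id : Fin (m + 1) → Fin (m + 1))) Function.injective_id
  obtain ⟨i, f, hfi, hall⟩ := hn c ⟨hs, by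
    rintro ⟨u, v, w, h1, h2, h3, n1, n2, n3⟩
    rcases hnr u v w h1 h2 h3 with h | h | h
    · exact n1 h
    · exact n2 h
    · exact n3 h⟩
  exact hf i f hfi hall

theorem g_even : ∀ m, g (2 * m) = 17 ^ m ∧ g (2 * m + 1) = 4 * 17 ^ m
  | 0 => by decide
  | (m + 1) => by
    have := g_even m
    have e1 : g (2 * (m + 1)) = 17 * g (2 * m) := rfl
    have e2 : g (2 * (m + 1) + 1) = 17 * g (2 * m + 1) := rfl
    rw [e1, e2, this.1, this.2]
    constructor <;> ring

end GRH1

/-- Theorem 1.3 (case H = H₁): for every `k ≥ 1`, `GR_k(H₁)` equals `17^(k/2) + 1`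
when `k` is even, and `4·17^((k-1)/2) + 1` when `k` is odd. -/
theorem GR_H1_value (k : ℕ) (hk : 1 ≤ k) :
    (Even k → GR k (fun _ => ⟨Fin 5, GH1⟩) = 17 ^ (k / 2) + 1) ∧
    (Odd k → GR k (fun _ => ⟨Fin 5, GH1⟩) = 4 * 17 ^ ((k - 1) / 2) + 1) := by
  rw [GRH1.GR_eq k hk]
  constructor
  · intro he
    obtain ⟨m, hm⟩ := he
    obtain rfl : k = 2 * m := by omega
    rw [(GRH1.g_even m).1]
    congr 2
    omega
  · rintro ⟨m, rfl⟩
    rw [(GRH1.g_even m).2]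
    congr 3
    omega
end

section
/- For every integer k ≥ 1: if k is even, then GR_k(H2) = 17^(k/2) + 1, and if k is odd, then GR_k(H2) = 4·17^((k−1)/2) + 1. -/
open SimpleGraph

set_option linter.unusedSectionVars false

/-! ### Basic predicates -/

/-- `u`, `v` are distinct and the edge `uv` has colour `i`. -/
def CE {V C : Type} (c : V → V → C) (i : C) (u v : V) : Prop := u ≠ v ∧ c u v = i

/-- no edge of colour `i` inside `S` -/
def NoE {V C : Type} (c : V → V → C) (i : C) (S : Finset V) : Prop :=
  ∀ u ∈ S, ∀ v ∈ S, ¬ CE c i u v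

/-- no triangle of colour `i` inside `S` -/
def NoT {V C : Type} (c : V → V → C) (i : C) (S : Finset V) : Prop :=
  ∀ u ∈ S, ∀ v ∈ S, ∀ w ∈ S, CE c i u v → CE c i u w → CE c i v w → False

/-- no triangle with a pendant edge of colour `i` inside `S` -/
def NoPaw {V C : Type} (c : V → V → C) (i : C) (S : Finset V) : Prop :=
  ∀ u ∈ S, ∀ v ∈ S, ∀ w ∈ S, ∀ t ∈ S, CE c i u v → CE c i u w → CE c i v w →
    CE c i t u → t ≠ v → t ≠ w → False

/-- no `K₄` of colour `i` inside `S` -/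
def NoK {V C : Type} (c : V → V → C) (i : C) (S : Finset V) : Prop :=
  ∀ x ∈ S, ∀ y ∈ S, ∀ z ∈ S, ∀ w ∈ S, CE c i x y → CE c i x z → CE c i x w →
    CE c i y z → CE c i y w → CE c i z w → False

/-- no `H₂` of colour `i` inside `S` -/
def NoH {V C : Type} (c : V → V → C) (i : C) (S : Finset V) : Prop :=
  ∀ x ∈ S, ∀ y ∈ S, ∀ z ∈ S, ∀ w ∈ S, ∀ t ∈ S, CE c i x y → CE c i x z → CE c i x w →
    CE c i y z → CE c i y w → CE c i z w → CE c i t x → CE c i t y → t ≠ z → t ≠ w → False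

/-- inside `Q` only the two colours `r`, `b` occur -/
def Two {V C : Type} (c : V → V → C) (r b : C) (Q : Finset V) : Prop :=
  ∀ u ∈ Q, ∀ v ∈ Q, u ≠ v → c u v = r ∨ c u v = b

section mono
variable {V C : Type} {c : V → V → C} {i r b : C} {S T : Finset V}

theorem CE.symm (sym : ∀ u v, c u v = c v u) {u v : V} (h : CE c i u v) : CE c i v u :=
  ⟨h.1.symm, by rw [sym]; exact h.2⟩

theorem NoE.mono (h : NoE c i S) (hT : T ⊆ S) : NoE c i T :=
  fun u hu v hv => h u (hT hu) v (hT hv)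

theorem NoT.mono (h : NoT c i S) (hT : T ⊆ S) : NoT c i T :=
  fun u hu v hv w hw => h u (hT hu) v (hT hv) w (hT hw)

theorem NoPaw.mono (h : NoPaw c i S) (hT : T ⊆ S) : NoPaw c i T :=
  fun u hu v hv w hw t ht => h u (hT hu) v (hT hv) w (hT hw) t (hT ht)

theorem NoK.mono (h : NoK c i S) (hT : T ⊆ S) : NoK c i T :=
  fun u hu v hv w hw t ht => h u (hT hu) v (hT hv) w (hT hw) t (hT ht)

theorem NoH.mono (h : NoH c i S) (hT : T ⊆ S) : NoH c i T :=
  fun u hu v hv w hw t ht s hs => h u (hT hu) v (hT hv) w (hT hw) t (hT ht) s (hT hs)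

theorem Two.mono (h : Two c r b S) (hT : T ⊆ S) : Two c r b T :=
  fun u hu v hv => h u (hT hu) v (hT hv)

theorem Two.swap (h : Two c r b S) : Two c b r S :=
  fun u hu v hv huv => (h u hu v hv huv).symm

end mono

/-! ### Small Ramsey numbers -/

section ramsey
variable {V C : Type} [DecidableEq V] [DecidableEq C] {c : V → V → C}

theorem exists_three {S : Finset V} (h : 3 ≤ S.card) :
    ∃ x ∈ S, ∃ y ∈ S, ∃ z ∈ S, x ≠ y ∧ x ≠ z ∧ y ≠ z := by
  obtain ⟨x, y, z, hx, hy, hz, h1, h2, h3⟩ := Finset.two_lt_card_iff.1 (show 2 < S.card by omega)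
  exact ⟨x, hx, y, hy, z, hz, h1, h2, h3⟩

theorem exists_four {S : Finset V} (h : 4 ≤ S.card) :
    ∃ x ∈ S, ∃ y ∈ S, ∃ z ∈ S, ∃ w ∈ S, x ≠ y ∧ x ≠ z ∧ y ≠ z ∧ x ≠ w ∧ y ≠ w ∧ z ≠ w := by
  obtain ⟨w, hw⟩ := Finset.card_pos.1 (show 0 < S.card by omega)
  have h1 : 3 ≤ (S.erase w).card := by rw [Finset.card_erase_of_mem hw]; omega
  obtain ⟨x, hx, y, hy, z, hz, h1, h2, h3⟩ := exists_three h1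
  simp only [Finset.mem_erase] at hx hy hz
  exact ⟨x, hx.2, y, hy.2, z, hz.2, w, hw, h1, h2, h3, hx.1, hy.1, hz.1⟩

/-- the neighbourhood of `v` in colour `i` inside `Q` -/
def nbr (c : V → V → C) (Q : Finset V) (i : C) (v : V) : Finset V :=
  Q.filter fun u => u ≠ v ∧ c v u = i

theorem mem_nbr {Q : Finset V} {i : C} {u v : V} : u ∈ nbr c Q i v ↔ u ∈ Q ∧ CE c i v u := by
  simp only [nbr, Finset.mem_filter, CE]
  constructor <;> rintro ⟨h1, h2, h3⟩ <;> exact ⟨h1, h2.symm, h3⟩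

theorem nbr_subset {Q : Finset V} {i : C} {v : V} : nbr c Q i v ⊆ Q := Finset.filter_subset _ _

theorem nbr_card {Q : Finset V} {r b : C} (hrb : r ≠ b) (h : Two c r b Q) {v : V} (hv : v ∈ Q) :
    (nbr c Q r v).card + (nbr c Q b v).card + 1 = Q.card := by
  have h1 : nbr c Q r v ∪ nbr c Q b v = Q.erase v := by
    ext u
    simp only [Finset.mem_union, mem_nbr, Finset.mem_erase, CE]
    constructor
    · rintro (⟨h1, h2, h3⟩ | ⟨h1, h2, h3⟩) <;> exact ⟨h2.symm, h1⟩
    · rintro ⟨h1, h2⟩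
      rcases h v hv u h2 h1.symm with h3 | h3
      · exact Or.inl ⟨h2, h1.symm, h3⟩
      · exact Or.inr ⟨h2, h1.symm, h3⟩
  have h2 : Disjoint (nbr c Q r v) (nbr c Q b v) := by
    rw [Finset.disjoint_left]
    intro u hu hu'
    exact hrb ((mem_nbr.1 hu).2.2.symm.trans (mem_nbr.1 hu').2.2)
  have h3 := Finset.card_union_of_disjoint h2
  rw [h1, Finset.card_erase_of_mem hv] at h3
  have := Finset.card_pos.2 ⟨v, hv⟩
  omega

/-- neighbourhoods in a triangle-free colour -/
theorem nbr_noE {Q : Finset V} {i : C} (h : NoT c i Q) {v : V} (hv : v ∈ Q) :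
    NoE c i (nbr c Q i v) := by
  intro u hu w hw huw
  rw [mem_nbr] at hu hw
  exact h v hv u hu.1 w hw.1 hu.2 hw.2 huw

theorem nbr_noT {Q : Finset V} {i : C} (h : NoK c i Q) {v : V} (hv : v ∈ Q) :
    NoT c i (nbr c Q i v) := by
  intro u hu w hw x hx h1 h2 h3
  rw [mem_nbr] at hu hw hx
  exact h v hv u hu.1 w hw.1 x hx.1 hu.2 hw.2 hx.2 h1 h2 h3

theorem two_of_noE {Q : Finset V} {r b : C} (h : Two c r b Q) (hb : NoE c b Q) :
    ∀ u ∈ Q, ∀ v ∈ Q, u ≠ v → CE c r u v := by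
  intro u hu v hv huv
  rcases h u hu v hv huv with h1 | h1
  · exact ⟨huv, h1⟩
  · exact absurd ⟨huv, h1⟩ (hb u hu v hv)

theorem card_le_two {Q : Finset V} {r b : C} (h : Two c r b Q) (hb : NoE c b Q) (hr : NoT c r Q) :
    Q.card ≤ 2 := by
  by_contra hc
  obtain ⟨x, hx, y, hy, z, hz, h1, h2, h3⟩ := exists_three (show 3 ≤ Q.card by omega)
  have H := two_of_noE h hb
  exact hr x hx y hy z hz (H x hx y hy h1) (H x hx z hz h2) (H y hy z hz h3)

theorem card_le_three {Q : Finset V} {r b : C} (h : Two c r b Q) (hb : NoE c b Q)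
    (hr : NoK c r Q) : Q.card ≤ 3 := by
  by_contra hc
  obtain ⟨x, hx, y, hy, z, hz, w, hw, h1, h2, h3, h4, h5, h6⟩ :=
    exists_four (show 4 ≤ Q.card by omega)
  have H := two_of_noE h hb
  exact hr x hx y hy z hz w hw (H x hx y hy h1) (H x hx z hz h2) (H x hx w hw h4)
    (H y hy z hz h3) (H y hy w hw h5) (H z hz w hw h6)

theorem R33 {Q : Finset V} {r b : C} (hrb : r ≠ b) (h : Two c r b Q) (hr : NoT c r Q)
    (hb : NoT c b Q) : Q.card ≤ 5 := by
  rcases Q.eq_empty_or_nonempty with rfl | ⟨v, hv⟩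
  · simp
  have h1 := nbr_card hrb h hv
  have h2 := card_le_two (h.mono nbr_subset) (nbr_noE hb hv) (hr.mono nbr_subset)
  have h3 := card_le_two (h.swap.mono nbr_subset) (nbr_noE hr hv) (hb.mono nbr_subset)
  omega

theorem parity [Fintype V] (sym : ∀ u v, c u v = c v u) {Q : Finset V} {i : C}
    (h9 : Q.card = 9) (h3 : ∀ v ∈ Q, (nbr c Q i v).card = 3) : False := by
  classical
  let G : SimpleGraph V :=
    { Adj := fun u v => u ∈ Q ∧ v ∈ Q ∧ CE c i u v
      symm := ⟨fun u v h => ⟨h.2.1, h.1, h.2.2.symm sym⟩⟩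
      loopless := ⟨fun u h => h.2.2.1 rfl⟩ }
  have hs := G.sum_degrees_eq_twice_card_edges
  have hd : ∀ v, G.degree v = if v ∈ Q then 3 else 0 := by
    intro v
    split_ifs with hv
    · rw [← h3 v hv, ← SimpleGraph.card_neighborFinset_eq_degree]
      congr 1
      ext u
      rw [SimpleGraph.mem_neighborFinset, mem_nbr]
      exact ⟨fun h => h.2, fun h => ⟨hv, h⟩⟩
    · rw [← SimpleGraph.card_neighborFinset_eq_degree, Finset.card_eq_zero]
      ext u
      rw [SimpleGraph.mem_neighborFinset]
      simp only [Finset.notMem_empty, iff_false]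
      exact fun h => hv h.1
  simp only [hd, Finset.sum_ite_mem, Finset.univ_inter, Finset.sum_const, h9] at hs
  simp only [smul_eq_mul] at hs
  omega

theorem R34 [Fintype V] (sym : ∀ u v, c u v = c v u) {Q : Finset V} {r b : C} (hrb : r ≠ b)
    (h : Two c r b Q) (hr : NoK c r Q) (hb : NoT c b Q) : Q.card ≤ 8 := by
  by_contra hc
  obtain ⟨P, hP, hP9⟩ := Finset.exists_subset_card_eq (show 9 ≤ Q.card by omega)
  have h := h.mono hP
  have hr := hr.mono hP
  have hb := hb.mono hP
  apply parity (i := b) sym hP9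
  intro v hv
  have h1 := nbr_card hrb h hv
  have h2 := card_le_three (h.mono nbr_subset) (nbr_noE hb hv) (hr.mono nbr_subset)
  have h3 := R33 hrb (h.mono nbr_subset) (nbr_noT hr hv) (hb.mono nbr_subset)
  omega

theorem R44 [Fintype V] (sym : ∀ u v, c u v = c v u) {Q : Finset V} {r b : C} (hrb : r ≠ b)
    (h : Two c r b Q) (hr : NoK c r Q) (hb : NoK c b Q) : Q.card ≤ 17 := by
  rcases Q.eq_empty_or_nonempty with rfl | ⟨v, hv⟩
  · simp
  have h1 := nbr_card hrb h hv
  have h2 := R34 sym hrb (h.mono nbr_subset) (hr.mono nbr_subset) (nbr_noT hb hv)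
  have h3 := R34 sym hrb.symm (h.swap.mono nbr_subset) (hb.mono nbr_subset) (nbr_noT hr hv)
  omega

/-- A vertex outside a red `K₄` sends at most one red edge to it. -/
theorem R3H [Fintype V] (sym : ∀ u v, c u v = c v u) {Q : Finset V} {r b : C} (hrb : r ≠ b)
    (h : Two c r b Q) (hr : NoH c r Q) (hb : NoT c b Q) : Q.card ≤ 8 := by
  by_cases hK : NoK c r Q
  · exact R34 sym hrb h hK hb
  by_contra hc
  simp only [NoK, not_forall] at hK
  obtain ⟨x, hx, y, hy, z, hz, w, hw, h1, h2, h3, h4, h5, h6, -⟩ := hK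
  have hO : 4 ≤ (Q \ {x, y, z, w}).card := by
    have := Finset.le_card_sdiff {x, y, z, w} Q
    have := Finset.card_le_four (a := x) (b := y) (c := z) (d := w)
    omega
  -- one more vertex is needed to conclude
  have hO5 : 5 ≤ (Q \ {x, y, z, w}).card := by
    have := Finset.le_card_sdiff {x, y, z, w} Q
    have := Finset.card_le_four (a := x) (b := y) (c := z) (d := w)
    omega
  have key : ∀ s ∈ Q \ {x, y, z, w}, ∀ t ∈ Q \ {x, y, z, w}, s ≠ t → CE c r s t := by
    intro s hs t ht hst
    refine ⟨hst, ?_⟩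
    simp only [Finset.mem_sdiff, Finset.mem_insert, Finset.mem_singleton, not_or] at hs ht
    rcases h s hs.1 t ht.1 hst with h0 | h0
    · exact h0
    exfalso
    have A : ∀ k ∈ Q, k ≠ s → k ≠ t → c s k = r ∨ c t k = r := by
      intro k hk h1 h2
      rcases h s hs.1 k hk h1.symm with h3 | h3
      · exact Or.inl h3
      rcases h t ht.1 k hk h2.symm with h4 | h4
      · exact Or.inr h4
      exact (hb s hs.1 t ht.1 k hk ⟨hst, h0⟩ ⟨h1.symm, h3⟩ ⟨h2.symm, h4⟩).elim
    have B : ∀ v ∈ Q, v ≠ x → v ≠ y → v ≠ z → v ≠ w →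
        (c v x = r → c v y = r → False) ∧ (c v x = r → c v z = r → False) ∧
        (c v x = r → c v w = r → False) ∧ (c v y = r → c v z = r → False) ∧
        (c v y = r → c v w = r → False) ∧ (c v z = r → c v w = r → False) := by
      intro v hv hvx hvy hvz hvw
      refine ⟨?_, ?_, ?_, ?_, ?_, ?_⟩ <;> intro ha hb
      · exact hr x hx y hy z hz w hw v hv h1 h2 h3 h4 h5 h6 ⟨hvx, ha⟩ ⟨hvy, hb⟩ hvz hvw
      · exact hr x hx z hz y hy w hw v hv h2 h1 h3 (h4.symm sym) h6 h5 ⟨hvx, ha⟩ ⟨hvz, hb⟩ hvy hvw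
      · exact hr x hx w hw y hy z hz v hv h3 h1 h2 (h5.symm sym) (h6.symm sym) h4 ⟨hvx, ha⟩
          ⟨hvw, hb⟩ hvy hvz
      · exact hr y hy z hz x hx w hw v hv h4 (h1.symm sym) h5 (h2.symm sym) h6 h3 ⟨hvy, ha⟩
          ⟨hvz, hb⟩ hvx hvw
      · exact hr y hy w hw x hx z hz v hv h5 (h1.symm sym) h4 (h3.symm sym) (h6.symm sym) h2
          ⟨hvy, ha⟩ ⟨hvw, hb⟩ hvx hvz
      · exact hr z hz w hw x hx y hy v hv h6 (h2.symm sym) (h4.symm sym) (h3.symm sym)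
          (h5.symm sym) h1 ⟨hvz, ha⟩ ⟨hvw, hb⟩ hvx hvy
    have Bs := B s hs.1 hs.2.1 hs.2.2.1 hs.2.2.2.1 hs.2.2.2.2
    have Bt := B t ht.1 ht.2.1 ht.2.2.1 ht.2.2.2.1 ht.2.2.2.2
    have Ax := A x hx (Ne.symm hs.2.1) (Ne.symm ht.2.1)
    have Ay := A y hy (Ne.symm hs.2.2.1) (Ne.symm ht.2.2.1)
    have Az := A z hz (Ne.symm hs.2.2.2.1) (Ne.symm ht.2.2.2.1)
    rcases Ax with Ax | Ax <;> rcases Ay with Ay | Ay <;> rcases Az with Az | Az <;>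
      first
      | exact Bs.1 Ax Ay
      | exact Bt.1 Ax Ay
      | exact Bs.2.1 Ax Az
      | exact Bt.2.1 Ax Az
      | exact Bs.2.2.2.1 Ay Az
      | exact Bt.2.2.2.1 Ay Az
  obtain ⟨v, hv⟩ := Finset.card_pos.1 (show 0 < (Q \ {x, y, z, w}).card by omega)
  have h4' : 4 ≤ ((Q \ {x, y, z, w}).erase v).card := by
    rw [Finset.card_erase_of_mem hv]; omega
  obtain ⟨p, hp, q, hq, s, hs, t, ht, e1, e2, e3, e4, e5, e6⟩ := exists_four h4'
  rw [Finset.mem_erase] at hp hq hs ht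
  have m : ∀ {u}, u ∈ Q \ {x, y, z, w} → u ∈ Q := fun h => (Finset.mem_sdiff.1 h).1
  exact hr p (m hp.2) q (m hq.2) s (m hs.2) t (m ht.2) v (m hv) (key p hp.2 q hq.2 e1)
    (key p hp.2 s hs.2 e2) (key p hp.2 t ht.2 e4) (key q hq.2 s hs.2 e3) (key q hq.2 t ht.2 e5)
    (key s hs.2 t ht.2 e6) (key v hv p hp.2 hp.1.symm) (key v hv q hq.2 hq.1.symm)
    hs.1.symm ht.1.symm

theorem RHH_aux [Fintype V] (sym : ∀ u v, c u v = c v u) {Q : Finset V} {r b : C} (hrb : r ≠ b)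
    (h : Two c r b Q) (hr : NoH c r Q) (hb : NoH c b Q) (hK : ¬ NoK c r Q) : Q.card ≤ 17 := by
  by_contra hc
  simp only [NoK, not_forall] at hK
  obtain ⟨x, hx, y, hy, z, hz, w, hw, h1, h2, h3, h4, h5, h6, -⟩ := hK
  have hO : 9 ≤ (Q \ {x, y, z, w}).card := by
    have := Finset.le_card_sdiff {x, y, z, w} Q
    have := Finset.card_le_four (a := x) (b := y) (c := z) (d := w)
    omega
  have hsub : Q \ {x, y, z, w} ⊆ Q := Finset.sdiff_subset
  have hT : NoT c b (Q \ {x, y, z, w}) := by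
    intro s hs t ht u hu e1 e2 e3
    simp only [Finset.mem_sdiff, Finset.mem_insert, Finset.mem_singleton, not_or] at hs ht hu
    have B : ∀ v ∈ Q, v ≠ x → v ≠ y → v ≠ z → v ≠ w →
        (CE c b v x ∧ CE c b v y ∧ CE c b v z) ∨ (CE c b v x ∧ CE c b v y ∧ CE c b v w) ∨
        (CE c b v x ∧ CE c b v z ∧ CE c b v w) ∨ (CE c b v y ∧ CE c b v z ∧ CE c b v w) := by
      intro v hv hvx hvy hvz hvw
      have C1 := fun ha hb =>
        hr x hx y hy z hz w hw v hv h1 h2 h3 h4 h5 h6 ⟨hvx, ha⟩ ⟨hvy, hb⟩ hvz hvw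
      have C2 := fun ha hb => hr x hx z hz y hy w hw v hv h2 h1 h3 (h4.symm sym) h6 h5 ⟨hvx, ha⟩
        ⟨hvz, hb⟩ hvy hvw
      have C3 := fun ha hb => hr x hx w hw y hy z hz v hv h3 h1 h2 (h5.symm sym) (h6.symm sym) h4
        ⟨hvx, ha⟩ ⟨hvw, hb⟩ hvy hvz
      have C4 := fun ha hb => hr y hy z hz x hx w hw v hv h4 (h1.symm sym) h5 (h2.symm sym) h6 h3
        ⟨hvy, ha⟩ ⟨hvz, hb⟩ hvx hvw
      have C5 := fun ha hb => hr y hy w hw x hx z hz v hv h5 (h1.symm sym) h4 (h3.symm sym)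
        (h6.symm sym) h2 ⟨hvy, ha⟩ ⟨hvw, hb⟩ hvx hvz
      have C6 := fun ha hb => hr z hz w hw x hx y hy v hv h6 (h2.symm sym) (h4.symm sym)
        (h3.symm sym) (h5.symm sym) h1 ⟨hvz, ha⟩ ⟨hvw, hb⟩ hvx hvy
      have D1 := h v hv x hx hvx
      have D2 := h v hv y hy hvy
      have D3 := h v hv z hz hvz
      have D4 := h v hv w hw hvw
      rcases D1 with D1 | D1 <;> rcases D2 with D2 | D2 <;> rcases D3 with D3 | D3 <;>
        rcases D4 with D4 | D4 <;>
        first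
        | exact (C1 D1 D2).elim
        | exact (C2 D1 D3).elim
        | exact (C3 D1 D4).elim
        | exact (C4 D2 D3).elim
        | exact (C5 D2 D4).elim
        | exact (C6 D3 D4).elim
        | exact Or.inl ⟨⟨hvx, D1⟩, ⟨hvy, D2⟩, ⟨hvz, D3⟩⟩
        | exact Or.inr (Or.inl ⟨⟨hvx, D1⟩, ⟨hvy, D2⟩, ⟨hvw, D4⟩⟩)
        | exact Or.inr (Or.inr (Or.inl ⟨⟨hvx, D1⟩, ⟨hvz, D3⟩, ⟨hvw, D4⟩⟩))
        | exact Or.inr (Or.inr (Or.inr ⟨⟨hvy, D2⟩, ⟨hvz, D3⟩, ⟨hvw, D4⟩⟩))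
    -- a blue `H₂` made of the triangle `s t u`, a common neighbour `k` and a vertex `k'`
    have F : ∀ k ∈ Q, ∀ k' ∈ Q, k ≠ k' → CE c b s k → CE c b t k → CE c b u k →
        (CE c b s k' ∧ CE c b t k' ∨ CE c b s k' ∧ CE c b u k' ∨ CE c b t k' ∧ CE c b u k') →
        k' ≠ s → k' ≠ t → k' ≠ u → False := by
      intro k hk k' hk' hkk f1 f2 f3 hor n1 n2 n3
      rcases hor with ⟨g1, g2⟩ | ⟨g1, g2⟩ | ⟨g1, g2⟩
      · exact hb s hs.1 t ht.1 u hu.1 k hk k' hk' e1 e2 f1 e3 f2 f3 (g1.symm sym) (g2.symm sym)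
          n3 hkk.symm
      · exact hb s hs.1 u hu.1 t ht.1 k hk k' hk' e2 e1 f1 (e3.symm sym) f3 f2 (g1.symm sym)
          (g2.symm sym) n2 hkk.symm
      · exact hb t ht.1 u hu.1 s hs.1 k hk k' hk' e3 (e1.symm sym) f2 (e2.symm sym) f3 f1
          (g1.symm sym) (g2.symm sym) n1 hkk.symm
    have F' : ∀ k ∈ Q, ∀ k' ∈ Q, k ≠ k' →  k' ≠ s → k' ≠ t → k' ≠ u →
        CE c b s k ∧ CE c b t k ∧ CE c b u k ∧
        (CE c b s k' ∧ CE c b t k' ∨ CE c b s k' ∧ CE c b u k' ∨ CE c b t k' ∧ CE c b u k') →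
        False := fun k hk k' hk' a n1 n2 n3 e => F k hk k' hk' a e.1 e.2.1 e.2.2.1 e.2.2.2 n1 n2 n3
    have xs := Ne.symm hs.2.1
    have ys := Ne.symm hs.2.2.1
    have zs := Ne.symm hs.2.2.2.1
    have ws := Ne.symm hs.2.2.2.2
    have xt := Ne.symm ht.2.1
    have yt := Ne.symm ht.2.2.1
    have zt := Ne.symm ht.2.2.2.1
    have wt := Ne.symm ht.2.2.2.2
    have xu := Ne.symm hu.2.1
    have yu := Ne.symm hu.2.2.1
    have zu := Ne.symm hu.2.2.2.1
    have wu := Ne.symm hu.2.2.2.2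
    have Fxy := F' x hx y hy h1.1 ys yt yu
    have Fxz := F' x hx z hz h2.1 zs zt zu
    have Fxw := F' x hx w hw h3.1 ws wt wu
    have Fyx := F' y hy x hx h1.1.symm xs xt xu
    have Fyz := F' y hy z hz h4.1 zs zt zu
    have Fyw := F' y hy w hw h5.1 ws wt wu
    have Fzx := F' z hz x hx h2.1.symm xs xt xu
    have Fzy := F' z hz y hy h4.1.symm ys yt yu
    have Fzw := F' z hz w hw h6.1 ws wt wu
    have Fwx := F' w hw x hx h3.1.symm xs xt xu
    have Fwy := F' w hw y hy h5.1.symm ys yt yu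
    have Fwz := F' w hw z hz h6.1.symm zs zt zu
    have Bs := B s hs.1 hs.2.1 hs.2.2.1 hs.2.2.2.1 hs.2.2.2.2
    have Bt := B t ht.1 ht.2.1 ht.2.2.1 ht.2.2.2.1 ht.2.2.2.2
    have Bu := B u hu.1 hu.2.1 hu.2.2.1 hu.2.2.2.1 hu.2.2.2.2
    clear F F' B
    rcases Bs with Bs | Bs | Bs | Bs <;> rcases Bt with Bt | Bt | Bt | Bt <;>
      rcases Bu with Bu | Bu | Bu | Bu <;>
      simp only [Bs, Bt, Bu, true_and, and_true, true_or, or_true, imp_false,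
        not_true_eq_false] at Fxy Fxz Fxw Fyx Fyz Fyw Fzx Fzy Fzw Fwx Fwy Fwz
  have := R3H sym hrb (h.mono hsub) (hr.mono hsub) hT
  omega

theorem RHH [Fintype V] (sym : ∀ u v, c u v = c v u) {Q : Finset V} {r b : C} (hrb : r ≠ b)
    (h : Two c r b Q) (hr : NoH c r Q) (hb : NoH c b Q) : Q.card ≤ 17 := by
  by_cases h1 : NoK c r Q
  · by_cases h2 : NoK c b Q
    · exact R44 sym hrb h h1 h2
    · exact RHH_aux sym hrb.symm h.swap hb hr h2
  · exact RHH_aux sym hrb h hr hb h1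

end ramsey

/-! ### Gallai's structure theorem -/

section gallai
variable {V C : Type} [DecidableEq V] {c : V → V → C}

/-- no rainbow triangle -/
def Gal {V C : Type} (c : V → V → C) : Prop :=
  ∀ u v w, u ≠ v → u ≠ w → v ≠ w → c u v = c u w ∨ c u v = c v w ∨ c u w = c v w

/-- `rep` picks representatives of a partition of `S` into at least two homogeneous parts with only
the colours `r`, `b` between the parts. -/
structure Parts {V C : Type} (c : V → V → C) (S : Finset V) (r b : C) (rep : V → V) : Prop where
  mem : ∀ u ∈ S, rep u ∈ S
  idem : ∀ u, rep (rep u) = rep u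
  two : ∀ u ∈ S, ∀ v ∈ S, rep u ≠ rep v → c u v = r ∨ c u v = b
  hom : ∀ u ∈ S, ∀ u' ∈ S, ∀ v ∈ S, rep u = rep u' → rep v ≠ rep u → c u v = c u' v
  nontriv : ∃ u ∈ S, ∃ v ∈ S, rep u ≠ rep v

theorem exists_parts (sym : ∀ u v, c u v = c v u) (gal : Gal c) {S X : Finset V} {r b : C}
    (hXS : X ⊆ S) (hX : X.Nonempty) (hY : (S \ X).Nonempty)
    (h : ∀ x ∈ X, ∀ y ∈ S \ X, c x y = r ∨ c x y = b) : ∃ rep, Parts c S r b rep := by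
  classical
  let R : V → V → Prop := fun u v => u ∈ S ∧ v ∈ S ∧ u ≠ v ∧ c u v ≠ r ∧ c u v ≠ b
  let st : Setoid V := ⟨Relation.EqvGen R, Relation.EqvGen.is_equivalence R⟩
  let rep : V → V := fun u => (Quotient.mk st u).out
  have hrep : ∀ u, Relation.EqvGen R (rep u) u := fun u => Quotient.mk_out (s := st) u
  have hrep2 : ∀ u v, Relation.EqvGen R u v → rep u = rep v := by
    intro u v huv
    have : Quotient.mk st u = Quotient.mk st v := Quotient.sound huv
    simp only [rep, this]
  have hrep3 : ∀ u v, rep u = rep v → Relation.EqvGen R u v := by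
    intro u v huv
    have h1 := hrep u
    rw [huv] at h1
    exact (h1.symm).trans _ _ _ (hrep v)
  have hS : ∀ u v, Relation.EqvGen R u v → (u ∈ S ↔ v ∈ S) := by
    intro u v huv
    induction huv with
    | rel x y h => exact ⟨fun _ => h.2.1, fun _ => h.1⟩
    | refl x => rfl
    | symm x y _ ih => exact ih.symm
    | trans x y z _ _ ih1 ih2 => exact ih1.trans ih2
  have hXX : ∀ u v, Relation.EqvGen R u v → (u ∈ X ↔ v ∈ X) := by
    intro u v huv
    induction huv with
    | rel x y hR =>
      obtain ⟨h1, h2, h3, h4, h5⟩ := hR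
      constructor
      · intro hx
        by_contra hy
        rcases h x hx y (Finset.mem_sdiff.2 ⟨h2, hy⟩) with h6 | h6
        · exact h4 h6
        · exact h5 h6
      · intro hy
        by_contra hx
        rcases h y hy x (Finset.mem_sdiff.2 ⟨h1, hx⟩) with h6 | h6
        · exact h4 (by rw [sym]; exact h6)
        · exact h5 (by rw [sym]; exact h6)
    | refl x => rfl
    | symm x y _ ih => exact ih.symm
    | trans x y z _ _ ih1 ih2 => exact ih1.trans ih2
  have htwo : ∀ u ∈ S, ∀ v ∈ S, rep u ≠ rep v → c u v = r ∨ c u v = b := by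
    intro u hu v hv huv
    by_contra hcon
    rw [not_or] at hcon
    refine huv (hrep2 _ _ (Relation.EqvGen.rel _ _ ⟨hu, hv, ?_, hcon.1, hcon.2⟩))
    rintro rfl
    exact huv rfl
  refine ⟨rep, ⟨?_, ?_, htwo, ?_, ?_⟩⟩
  · intro u hu
    exact (hS _ _ (hrep u)).2 hu
  · intro u
    exact hrep2 _ _ (hrep u)
  · intro u hu u' hu' v hv huu' hvu
    have key : ∀ x y, Relation.EqvGen R x y → x ∈ S → rep v ≠ rep x → c x v = c y v := by
      intro x y hxy
      induction hxy with
      | rel x y hR =>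
        intro hx hvx
        have hvy : rep v ≠ rep y := by
          rwa [← hrep2 _ _ (Relation.EqvGen.rel _ _ hR)]
        obtain ⟨h1, h2, h3, h4, h5⟩ := hR
        have e1 := htwo x h1 v hv hvx.symm
        have e2 := htwo y h2 v hv hvy.symm
        rcases gal x y v h3 (fun h => hvx (by rw [h])) (fun h => hvy (by rw [h])) with h | h | h
        · rw [← h] at e1
          exact (e1.elim h4 h5).elim
        · rw [← h] at e2
          exact (e2.elim h4 h5).elim
        · exact h
      | refl x => exact fun _ _ => rfl
      | symm x y hxy ih =>
        intro hx hvx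
        rw [← hrep2 _ _ hxy] at hvx
        exact (ih ((hS _ _ hxy).2 hx) hvx).symm
      | trans x y z hxy _ ih1 ih2 =>
        intro hx hvx
        rw [ih1 hx hvx]
        rw [hrep2 _ _ hxy] at hvx
        exact ih2 ((hS _ _ hxy).1 hx) hvx
    exact key u u' (hrep3 _ _ huu') hu hvu
  · obtain ⟨x, hx⟩ := hX
    obtain ⟨y, hy⟩ := hY
    rw [Finset.mem_sdiff] at hy
    exact ⟨x, hXS hx, y, hy.1, fun h => hy.2 ((hXX _ _ (hrep3 _ _ h)).1 hx)⟩

theorem gallai_cut (sym : ∀ u v, c u v = c v u) (gal : Gal c) (S : Finset V) (hS : 2 ≤ S.card) :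
    ∃ r b : C, ∃ X ⊆ S, X.Nonempty ∧ (S \ X).Nonempty ∧
      ∀ x ∈ X, ∀ y ∈ S \ X, c x y = r ∨ c x y = b := by
  induction S using Finset.induction_on with
  | empty => simp at hS
  | insert v S hv ih =>
    rw [Finset.card_insert_of_notMem hv] at hS
    -- the cut isolating `v`
    have iso : ∀ r b : C, (∀ z ∈ S, c v z = r ∨ c v z = b) →
        ∃ r b : C, ∃ X ⊆ insert v S, X.Nonempty ∧ (insert v S \ X).Nonempty ∧
          ∀ x ∈ X, ∀ y ∈ insert v S \ X, c x y = r ∨ c x y = b := by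
      intro r b h
      obtain ⟨w, hw⟩ := Finset.card_pos.1 (show 0 < S.card by omega)
      refine ⟨r, b, {v}, by simp, by simp, ⟨w, ?_⟩, ?_⟩
      · rw [Finset.mem_sdiff, Finset.mem_singleton]
        exact ⟨Finset.mem_insert_of_mem hw, fun h => hv (h ▸ hw)⟩
      · intro x hx y hy
        rw [Finset.mem_singleton] at hx
        subst hx
        rw [Finset.mem_sdiff, Finset.mem_singleton, Finset.mem_insert] at hy
        exact h y (hy.1.resolve_left hy.2)
    by_cases hS1 : S.card = 1
    · obtain ⟨w, rfl⟩ := Finset.card_eq_one.1 hS1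
      apply iso (c v w) (c v w)
      intro z hz
      rw [Finset.mem_singleton] at hz
      subst hz
      exact Or.inl rfl
    obtain ⟨r, b, X, hXS, hX, hY, hXY⟩ := ih (by omega)
    obtain ⟨rep, hP⟩ := exists_parts sym gal hXS hX hY hXY
    have nev : ∀ u ∈ S, v ≠ u := fun u hu h => hv (h ▸ hu)
    by_cases h0 : ∃ u0 ∈ S, ∀ u ∈ S, rep u = rep u0 → c v u = r ∨ c v u = b
    · classical
      obtain ⟨u0, hu0, h0⟩ := h0
      refine ⟨r, b, S.filter (fun u => rep u = rep u0), ?_, ⟨u0, by simp [hu0]⟩, ⟨v, ?_⟩, ?_⟩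
      · exact (Finset.filter_subset _ _).trans (Finset.subset_insert _ _)
      · simp [hv]
      · intro x hx y hy
        rw [Finset.mem_filter] at hx
        simp only [Finset.mem_sdiff, Finset.mem_insert, Finset.mem_filter, not_and] at hy
        rcases hy.1 with rfl | hyS
        · rw [sym]
          exact h0 x hx.1 hx.2
        · exact hP.two x hx.1 y hyS (by rw [hx.2]; exact (hy.2 hyS ·.symm))
    · push Not at h0
      obtain ⟨p, hp, q, hq, hpq⟩ := hP.nontriv
      obtain ⟨x0, hx0, ex0, gx0⟩ := h0 p hp
      obtain ⟨y0, hy0, ey0, gy0⟩ := h0 q hq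
      have hxy : rep x0 ≠ rep y0 := by rwa [ex0, ey0]
      have other : ∀ x ∈ S, ∀ y ∈ S, rep x ≠ rep y → (c v x ≠ r ∧ c v x ≠ b) →
          (c v y ≠ r ∧ c v y ≠ b) → c v x = c v y := by
        intro x hx y hy hxy h1 h2
        have e := hP.two x hx y hy hxy
        rcases gal v x y (nev x hx) (nev y hy) (fun h => hxy (by rw [h])) with h | h | h
        · exact h
        · rw [← h] at e
          exact (e.elim h1.1 h1.2).elim
        · rw [← h] at e
          exact (e.elim h2.1 h2.2).elim
      have exy := other x0 hx0 y0 hy0 hxy gx0 gy0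
      -- a vertex joined by the third colour in a different part
      have diff : ∀ z ∈ S, ∃ x ∈ S, rep x ≠ rep z ∧ c v x = c v x0 := by
        intro z hz
        by_cases h : rep x0 = rep z
        · exact ⟨y0, hy0, fun h' => hxy (h.trans h'.symm), exy.symm⟩
        · exact ⟨x0, hx0, h, rfl⟩
      have same : ∀ z ∈ S, ∃ x ∈ S, rep x = rep z ∧ c v x = c v x0 := by
        intro z hz
        obtain ⟨x, hx, ex, gx⟩ := h0 z hz
        obtain ⟨y, hy, ey, gy⟩ := diff x hx
        refine ⟨x, hx, ex, ?_⟩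
        rw [← gy]
        exact other x hx y hy ey.symm gx (by rw [gy]; exact gx0)
      by_cases hall : ∀ z ∈ S, c v z = c v x0
      · exact iso (c v x0) (c v x0) fun z hz => Or.inl (hall z hz)
      push Not at hall
      obtain ⟨z0, hz0, hd⟩ := hall
      have step : ∀ y ∈ S, rep y ≠ rep z0 → c y z0 = c v z0 := by
        intro y hy hyz
        obtain ⟨u, hu, eu, gu⟩ := same y hy
        have hne : rep u ≠ rep z0 := by rwa [eu]
        rw [← hP.hom u hu y hy z0 hz0 eu hne.symm]
        have e := hP.two u hu z0 hz0 hne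
        rcases gal v u z0 (nev u hu) (nev z0 hz0) (fun h => hne (by rw [h])) with h | h | h
        · exact (hd (by rw [← h, gu])).elim
        · rw [← h, gu] at e
          exact (e.elim gx0.1 gx0.2).elim
        · exact h.symm
      have fin : ∀ z ∈ S, ∀ x ∈ S, x ≠ z → c v x = c v x0 → c x z = c v z0 →
          c v z = c v x0 ∨ c v z = c v z0 := by
        intro z hz x hx hxz e1 e2
        rcases gal v x z (nev x hx) (nev z hz) hxz with h | h | h
        · exact Or.inl (by rw [← h, e1])
        · exact (hd (by rw [← e2, ← h, e1])).elim
        · exact Or.inr (by rw [h, e2])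
      apply iso (c v x0) (c v z0)
      intro z hz
      by_cases hzz : rep z = rep z0
      · obtain ⟨x, hx, ex, gx⟩ := diff z hz
        refine fin z hz x hx (fun h => ex (by rw [h])) gx ?_
        rw [sym, hP.hom z hz z0 hz0 x hx hzz ex, sym]
        exact step x hx (by rwa [← hzz])
      · obtain ⟨x, hx, ex, gx⟩ := same z0 hz0
        refine fin z hz x hx (fun h => hzz (by rw [← ex, h])) gx ?_
        rw [hP.hom x hx z0 hz0 z hz ex (by rwa [ex]), sym]
        exact step z hz hzz

end gallai

/-! ### The numerical bounds -/

/-- the largest order when `a` colours avoid `H₂` -/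
def alph : ℕ → ℕ
  | 0 => 1
  | 1 => 4
  | n + 2 => 17 * alph n

/-- the largest order when `b` colours avoid triangles -/
def bet : ℕ → ℕ
  | 0 => 1
  | 1 => 2
  | n + 2 => 5 * bet n

theorem alph_succ : ∀ a, ∃ s, 1 ≤ s ∧
    ((alph a = s ∧ alph (a + 1) = 4 * s) ∨ (alph a = 4 * s ∧ alph (a + 1) = 17 * s))
  | 0 => ⟨1, by simp [alph]⟩
  | 1 => ⟨1, by simp [alph]⟩
  | n + 2 => by
    obtain ⟨s, h1, h2⟩ := alph_succ n
    refine ⟨17 * s, by omega, ?_⟩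
    simp only [alph]
    omega

theorem bet_succ : ∀ a, ∃ s, 1 ≤ s ∧
    ((bet a = s ∧ bet (a + 1) = 2 * s) ∨ (bet a = 2 * s ∧ bet (a + 1) = 5 * s))
  | 0 => ⟨1, by simp [bet]⟩
  | 1 => ⟨1, by simp [bet]⟩
  | n + 2 => by
    obtain ⟨s, h1, h2⟩ := bet_succ n
    refine ⟨5 * s, by omega, ?_⟩
    simp only [bet]
    omega

theorem num (a b : ℕ) : ∃ m, 1 ≤ m ∧
    ((alph a * bet b = m ∧ alph a * bet (b + 1) = 2 * m ∧ alph (a + 1) * bet b = 4 * m ∧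
        alph (a + 1) * bet (b + 1) = 8 * m) ∨
      (alph a * bet b = 2 * m ∧ alph a * bet (b + 1) = 5 * m ∧ alph (a + 1) * bet b = 8 * m ∧
        alph (a + 1) * bet (b + 1) = 20 * m) ∨
      (alph a * bet b = 4 * m ∧ alph a * bet (b + 1) = 8 * m ∧ alph (a + 1) * bet b = 17 * m ∧
        alph (a + 1) * bet (b + 1) = 34 * m) ∨
      (alph a * bet b = 8 * m ∧ alph a * bet (b + 1) = 20 * m ∧ alph (a + 1) * bet b = 34 * m ∧
        alph (a + 1) * bet (b + 1) = 85 * m)) := by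
  obtain ⟨s, hs, h1⟩ := alph_succ a
  obtain ⟨t, ht, h2⟩ := bet_succ b
  refine ⟨s * t, Nat.mul_pos hs ht, ?_⟩
  rcases h1 with ⟨h1, h1'⟩ | ⟨h1, h1'⟩ <;> rcases h2 with ⟨h2, h2'⟩ | ⟨h2, h2'⟩ <;>
    rw [h1, h1', h2, h2']
  · left; refine ⟨?_, ?_, ?_, ?_⟩ <;> ring
  · right; left; refine ⟨?_, ?_, ?_, ?_⟩ <;> ring
  · right; right; left; refine ⟨?_, ?_, ?_, ?_⟩ <;> ring
  · right; right; right; refine ⟨?_, ?_, ?_, ?_⟩ <;> ring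

/-! ### Joins -/

section main
variable {V C : Type} [LinearOrder V] [DecidableEq C] {c : V → V → C}

/-- all pairs between `X` and `Y` have colour `i` -/
def MJoin {V C : Type} (c : V → V → C) (i : C) (X Y : Finset V) : Prop :=
  ∀ x ∈ X, ∀ y ∈ Y, CE c i x y

theorem MJoin.symm (sym : ∀ u v, c u v = c v u) {i : C} {X Y : Finset V} (h : MJoin c i X Y) :
    MJoin c i Y X := fun y hy x hx => (h x hx y hy).symm sym

theorem MJoin.noE (sym : ∀ u v, c u v = c v u) {i : C} {S X Y : Finset V} (h : MJoin c i X Y)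
    (hX : X ⊆ S) (hY : Y ⊆ S) (hS : NoT c i S) (hne : Y.Nonempty) : NoE c i X := by
  intro u hu v hv huv
  obtain ⟨y, hy⟩ := hne
  exact hS u (hX hu) v (hX hv) y (hY hy) huv (h u hu y hy) (h v hv y hy)

theorem MJoin.noPaw (sym : ∀ u v, c u v = c v u) {i : C} {S X Y : Finset V} (h : MJoin c i X Y)
    (hX : X ⊆ S) (hY : Y ⊆ S) (hS : NoH c i S) (hne : Y.Nonempty) : NoPaw c i X := by
  intro u hu v hv w hw t ht h1 h2 h3 h4 h5 h6
  obtain ⟨y, hy⟩ := hne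
  exact hS y (hY hy) u (hX hu) v (hX hv) w (hX hw) t (hX ht) ((h u hu y hy).symm sym)
    ((h v hv y hy).symm sym) ((h w hw y hy).symm sym) h1 h2 h3 (h t ht y hy) h4 h5 h6

theorem MJoin.noT (sym : ∀ u v, c u v = c v u) {i : C} {S X Y : Finset V} (h : MJoin c i X Y)
    (hX : X ⊆ S) (hY : Y ⊆ S) (hS : NoH c i S) (h2 : 2 ≤ Y.card) : NoT c i X := by
  intro u hu v hv w hw h1 h2 h3
  obtain ⟨y, hy, y', hy', hyy⟩ := Finset.one_lt_card.1 (show 1 < Y.card by omega)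
  exact hS u (hX hu) v (hX hv) w (hX hw) y (hY hy) y' (hY hy') h1 h2 (h u hu y hy) h3
    (h v hv y hy) (h w hw y hy) ((h u hu y' hy').symm sym) ((h v hv y' hy').symm sym)
    (h w hw y' hy').1.symm hyy.symm

theorem MJoin.noE' (sym : ∀ u v, c u v = c v u) {i : C} {S X Y : Finset V} (h : MJoin c i X Y)
    (hX : X ⊆ S) (hY : Y ⊆ S) (hS : NoH c i S) (hE : ¬ NoE c i X) (h3 : 3 ≤ Y.card) :
    NoE c i Y := by
  intro p hp q hq hpq
  simp only [NoE, not_forall, not_not] at hE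
  obtain ⟨u, hu, v, hv, huv⟩ := hE
  have : ∃ s ∈ Y, s ≠ p ∧ s ≠ q := by
    have h1 : 0 < ((Y.erase p).erase q).card := by
      rw [Finset.card_erase_of_mem (Finset.mem_erase.2 ⟨hpq.1.symm, hq⟩),
        Finset.card_erase_of_mem hp]
      omega
    obtain ⟨s, hs⟩ := Finset.card_pos.1 h1
    simp only [Finset.mem_erase] at hs
    exact ⟨s, hs.2.2, hs.2.1, hs.1⟩
  obtain ⟨s, hs, hsp, hsq⟩ := this
  exact hS u (hX hu) v (hX hv) p (hY hp) q (hY hq) s (hY hs) huv (h u hu p hp) (h u hu q hq)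
    (h v hv p hp) (h v hv q hq) hpq ((h u hu s hs).symm sym) ((h v hv s hs).symm sym) hsp hsq

theorem MJoin.dich (sym : ∀ u v, c u v = c v u) {i : C} {S X Y : Finset V} (h : MJoin c i X Y)
    (hX : X ⊆ S) (hY : Y ⊆ S) (hS : NoH c i S) (hE : ¬ NoE c i X) :
    NoE c i Y ∨ (X.card ≤ 2 ∧ Y.card ≤ 2) := by
  by_cases hY3 : 3 ≤ Y.card
  · exact Or.inl (h.noE' sym hX hY hS hE hY3)
  by_cases hX3 : 3 ≤ X.card
  · left
    by_contra hEY
    exact hE ((h.symm sym).noE' sym hY hX hS hEY hX3)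
  · right
    omega

/-! ### The induction -/

/-- the colours in `A` avoid `H₂`, those in `B` avoid triangles, no other colour occurs -/
structure Good {V C : Type} (c : V → V → C) (S : Finset V) (A B : Finset C) : Prop where
  disj : Disjoint A B
  col : ∀ u ∈ S, ∀ v ∈ S, u ≠ v → c u v ∈ A ∨ c u v ∈ B
  noH : ∀ i ∈ A, NoH c i S
  noT : ∀ i ∈ B, NoT c i S

/-- the bound holds for all sets with fewer than `n` elements -/
def IHyp {V C : Type} (c : V → V → C) (n : ℕ) : Prop :=
  ∀ T : Finset V, T.card < n → ∀ A B : Finset C, Good c T A B →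
    T.card ≤ alph A.card * bet B.card

variable {S T X Y : Finset V} {A B : Finset C} {i j r b : C} {n p q : ℕ}

theorem Good.mono (h : Good c S A B) (hT : T ⊆ S) : Good c T A B :=
  ⟨h.disj, fun u hu v hv => h.col u (hT hu) v (hT hv), fun i hi => (h.noH i hi).mono hT,
    fun i hi => (h.noT i hi).mono hT⟩

theorem Good.notB (h : Good c S A B) (hi : i ∈ A) : i ∉ B := Finset.disjoint_left.1 h.disj hi

theorem Good.eraseA (h : Good c S A B) (hE : NoE c i S) : Good c S (A.erase i) B := by
  refine ⟨h.disj.mono_left (Finset.erase_subset _ _), ?_, ?_, h.noT⟩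
  · intro u hu v hv huv
    refine (h.col u hu v hv huv).imp_left fun h1 => Finset.mem_erase.2 ⟨?_, h1⟩
    exact fun h2 => hE u hu v hv ⟨huv, h2⟩
  · exact fun j hj => h.noH j (Finset.mem_of_mem_erase hj)

theorem Good.eraseB (h : Good c S A B) (hE : NoE c i S) : Good c S A (B.erase i) := by
  refine ⟨h.disj.mono_right (Finset.erase_subset _ _), ?_, h.noH, ?_⟩
  · intro u hu v hv huv
    refine (h.col u hu v hv huv).imp_right fun h1 => Finset.mem_erase.2 ⟨?_, h1⟩
    exact fun h2 => hE u hu v hv ⟨huv, h2⟩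
  · exact fun j hj => h.noT j (Finset.mem_of_mem_erase hj)

theorem Good.move (h : Good c S A B) (hT : NoT c i S) : Good c S (A.erase i) (insert i B) := by
  refine ⟨?_, ?_, fun j hj => h.noH j (Finset.mem_of_mem_erase hj), ?_⟩
  · rw [Finset.disjoint_left]
    intro j hj hj'
    rw [Finset.mem_erase] at hj
    rw [Finset.mem_insert] at hj'
    exact Finset.disjoint_left.1 h.disj hj.2 (hj'.resolve_left hj.1)
  · intro u hu v hv huv
    rw [Finset.mem_erase, Finset.mem_insert]
    rcases h.col u hu v hv huv with h1 | h1
    · by_cases h2 : c u v = i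
      · exact Or.inr (Or.inl h2)
      · exact Or.inl ⟨h2, h1⟩
    · exact Or.inr (Or.inr h1)
  · intro j hj
    rw [Finset.mem_insert] at hj
    rcases hj with rfl | hj
    · exact hT
    · exact h.noT j hj

theorem card_erase' {D : Finset C} (hi : i ∈ D) (hc : D.card = p + 1) :
    (D.erase i).card = p := by rw [Finset.card_erase_of_mem hi]; omega

theorem card_insert' {D : Finset C} (hi : i ∉ D) (hc : D.card = p) :
    (insert i D).card = p + 1 := by rw [Finset.card_insert_of_notMem hi]; omega

theorem IHyp.bd (ih : IHyp c n) (hn : T.card < n) (h : Good c T A B) (hA : A.card = p)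
    (hB : B.card = q) : T.card ≤ alph p * bet q := by
  rw [← hA, ← hB]; exact ih T hn A B h

theorem IHyp.bdAE (ih : IHyp c n) (hn : T.card < n) (h : Good c T A B) (hA : A.card = p + 1)
    (hB : B.card = q) (hi : i ∈ A) (hE : NoE c i T) : T.card ≤ alph p * bet q :=
  ih.bd hn (h.eraseA hE) (card_erase' hi hA) hB

theorem IHyp.bdAT (ih : IHyp c n) (hn : T.card < n) (h : Good c T A B) (hA : A.card = p + 1)
    (hB : B.card = q) (hi : i ∈ A) (hE : NoT c i T) : T.card ≤ alph p * bet (q + 1) :=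
  ih.bd hn (h.move hE) (card_erase' hi hA) (card_insert' (h.notB hi) hB)

theorem IHyp.bdBE (ih : IHyp c n) (hn : T.card < n) (h : Good c T A B) (hA : A.card = p)
    (hB : B.card = q + 1) (hi : i ∈ B) (hE : NoE c i T) : T.card ≤ alph p * bet q :=
  ih.bd hn (h.eraseB hE) hA (card_erase' hi hB)

theorem IHyp.paw (sym : ∀ u v, c u v = c v u) (ih : IHyp c n) (hn : T.card < n)
    (h : Good c T A B) (hA : A.card = p + 1) (hB : B.card = q) (hi : i ∈ A) (hP : NoPaw c i T) :
    T.card ≤ alph p * bet q + alph p * bet (q + 1) := by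
  classical
  -- the least vertices of the triangles of colour `i`
  let M : Finset V := T.filter fun u => ∃ v ∈ T, ∃ w ∈ T, u < v ∧ u < w ∧
    CE c i u v ∧ CE c i u w ∧ CE c i v w
  have hMT : M ⊆ T := Finset.filter_subset _ _
  have hM : NoE c i M := by
    have key : ∀ u ∈ M, ∀ v ∈ M, CE c i u v → u < v := by
      intro u hu v hv huv
      obtain ⟨huT, x, hx, y, hy, h1, h2, h3, h4, h5⟩ := Finset.mem_filter.1 hu
      by_cases e1 : v = x
      · rw [e1]; exact h1
      by_cases e2 : v = y
      · rw [e2]; exact h2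
      exact (hP u huT x hx y hy v (hMT hv) h3 h4 h5 (huv.symm sym) e1 e2).elim
    intro u hu v hv huv
    exact lt_asymm (key u hu v hv huv) (key v hv u hu (huv.symm sym))
  have hD : NoT c i (T \ M) := by
    have key : ∀ u ∈ T \ M, ∀ v ∈ T, ∀ w ∈ T, CE c i u v → CE c i u w → CE c i v w →
        u < v → u < w → False := by
      intro u hu v hv w hw h1 h2 h3 h4 h5
      rw [Finset.mem_sdiff] at hu
      exact hu.2 (Finset.mem_filter.2 ⟨hu.1, v, hv, w, hw, h4, h5, h1, h2, h3⟩)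
    intro u hu v hv w hw h1 h2 h3
    have m : ∀ {x}, x ∈ T \ M → x ∈ T := fun h => (Finset.mem_sdiff.1 h).1
    rcases lt_or_gt_of_ne h1.1 with l1 | l1
    · rcases lt_or_gt_of_ne h2.1 with l2 | l2
      · exact key u hu v (m hv) w (m hw) h1 h2 h3 l1 l2
      · exact key w hw u (m hu) v (m hv) (h2.symm sym) (h3.symm sym) h1 l2 (l2.trans l1)
    · rcases lt_or_gt_of_ne h3.1 with l2 | l2
      · exact key v hv u (m hu) w (m hw) (h1.symm sym) h3 h2 l1 l2
      · exact key w hw u (m hu) v (m hv) (h2.symm sym) (h3.symm sym) h1 (l2.trans l1) l2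
  have c1 := Finset.card_le_card hMT
  have hDT : T \ M ⊆ T := Finset.sdiff_subset
  have c2 := Finset.card_le_card hDT
  have c3 := Finset.card_sdiff_add_card_eq_card hMT
  have b1 := ih.bdAE (by omega) (h.mono hMT) hA hB hi hM
  have b2 := ih.bdAT (by omega) (h.mono hDT) hA hB hi hD
  omega

/-- A set split into two parts joined in an `H₂`-free colour. -/
theorem IHyp.join (sym : ∀ u v, c u v = c v u) (ih : IHyp c n) (hX : X ⊆ S) (hY : Y ⊆ S)
    (hXn : X.card < n) (hYn : Y.card < n) (hXne : X.Nonempty) (hYne : Y.Nonempty)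
    (h : Good c S A B) (hA : A.card = p + 1) (hB : B.card = q) (hi : i ∈ A)
    (hJ : MJoin c i X Y) :
    X.card + Y.card ≤ alph p * bet q + alph p * bet (q + 1) + 1 := by
  obtain ⟨m, hm, hnum⟩ := num p q
  have hH := h.noH i hi
  have hX1 := Finset.card_pos.2 hXne
  have hY1 := Finset.card_pos.2 hYne
  by_cases h1 : Y.card = 1
  · have := ih.paw sym hXn (h.mono hX) hA hB hi (hJ.noPaw sym hX hY hH hYne)
    omega
  by_cases h2 : X.card = 1
  · have := ih.paw sym hYn (h.mono hY) hA hB hi ((hJ.symm sym).noPaw sym hY hX hH hXne)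
    omega
  have b1 := ih.bdAT hXn (h.mono hX) hA hB hi (hJ.noT sym hX hY hH (by omega))
  have b2 := ih.bdAT hYn (h.mono hY) hA hB hi ((hJ.symm sym).noT sym hY hX hH (by omega))
  by_cases hE : NoE c i X
  · have := ih.bdAE hXn (h.mono hX) hA hB hi hE
    omega
  rcases hJ.dich sym hX hY hH hE with hE' | hE'
  · have := ih.bdAE hYn (h.mono hY) hA hB hi hE'
    omega
  · omega

/-- A homogeneous part `P` with its two neighbourhoods. -/
structure Split {V C : Type} [DecidableEq V] (c : V → V → C) (S : Finset V) (r b : C)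
    (P R D : Finset V) : Prop where
  hP : P ⊆ S
  hR : R ⊆ S
  hD : D ⊆ S
  Pne : P.Nonempty
  Rne : R.Nonempty
  Dne : D.Nonempty
  jR : MJoin c r P R
  jD : MJoin c b P D
  card : P.card + R.card + D.card = S.card
  strR : NoH c b S → NoE c r R → NoPaw c b R ∨ ∃ X Y, X ⊆ R ∧ Y ⊆ R ∧ X.Nonempty ∧ Y.Nonempty ∧
    X.card + Y.card = R.card ∧ MJoin c b X Y
  strD : NoH c r S → NoE c b D → NoPaw c r D ∨ ∃ X Y, X ⊆ D ∧ Y ⊆ D ∧ X.Nonempty ∧ Y.Nonempty ∧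
    X.card + Y.card = D.card ∧ MJoin c r X Y

theorem Split.swap {P R D : Finset V} (h : Split c S r b P R D) : Split c S b r P D R :=
  ⟨h.hP, h.hD, h.hR, h.Pne, h.Dne, h.Rne, h.jD, h.jR, by have := h.card; omega, h.strD, h.strR⟩

theorem Split.lt {P R D : Finset V} (h : Split c S r b P R D) :
    P.card < S.card ∧ R.card < S.card ∧ D.card < S.card := by
  have := h.card
  have := Finset.card_pos.2 h.Pne
  have := Finset.card_pos.2 h.Rne
  have := Finset.card_pos.2 h.Dne
  omega

/-- If `P` has a red edge, then its red neighbourhood is small. -/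
theorem Split.boundR (sym : ∀ u v, c u v = c v u) {P R D : Finset V} (hs : Split c S r b P R D)
    (ih : IHyp c S.card) (h : Good c S A B) (hA : A.card = p + 2) (hB : B.card = q)
    (hrb : r ≠ b) (hr : r ∈ A) (hb : b ∈ A) (hE : ¬ NoE c r P) :
    R.card ≤ alph p * bet q + alph p * bet (q + 1) + 1 := by
  obtain ⟨m, hm, hnum⟩ := num p q
  obtain ⟨l1, l2, l3⟩ := hs.lt
  rcases hs.jR.dich sym hs.hP hs.hR (h.noH r hr) hE with hR | hR
  · have g := (h.mono hs.hR).eraseA hR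
    have hbA : b ∈ A.erase r := Finset.mem_erase.2 ⟨hrb.symm, hb⟩
    have hA' : (A.erase r).card = p + 1 := card_erase' hr hA
    rcases hs.strR (h.noH b hb) hR with hp | ⟨X, Y, hX, hY, hXn, hYn, hc, hJ⟩
    · have := ih.paw sym l2 g hA' hB hbA hp
      omega
    · have := Finset.card_pos.2 hXn
      have := Finset.card_pos.2 hYn
      have := ih.join sym hX hY (by omega) (by omega) hXn hYn g hA' hB hbA hJ
      omega
  · omega

theorem card_two_of_edge {P : Finset V} (hE : ¬ NoE c i P) : 2 ≤ P.card := by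
  simp only [NoE, not_forall, not_not] at hE
  obtain ⟨u, hu, v, hv, huv⟩ := hE
  exact Finset.one_lt_card.2 ⟨u, hu, v, hv, huv.1⟩

theorem not_noE_of_not_noT {P : Finset V} (hE : ¬ NoT c i P) : ¬ NoE c i P :=
  fun h => hE fun u hu v hv _ _ h1 _ _ => h u hu v hv h1

/-- If `P` has a red triangle, then its red neighbourhood is a single vertex. -/
theorem Split.one (sym : ∀ u v, c u v = c v u) {P R D : Finset V} (hs : Split c S r b P R D)
    (hH : NoH c r S) (hT : ¬ NoT c r P) : R.card = 1 := by
  have := Finset.card_pos.2 hs.Rne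
  by_contra hR
  exact hT (hs.jR.noT sym hs.hP hs.hR hH (by omega))

/-- both colours `H₂`-free, `P` has both red and blue edges, but no blue triangle -/
theorem Split.caseRB (sym : ∀ u v, c u v = c v u) {P R D : Finset V} (hs : Split c S r b P R D)
    (ih : IHyp c S.card) (h : Good c S A B) (hA : A.card = p + 2) (hB : B.card = q)
    (hrb : r ≠ b) (hr : r ∈ A) (hb : b ∈ A) (hE : ¬ NoE c r P) (hE' : ¬ NoE c b P)
    (hT : NoT c b P) : S.card ≤ 17 * (alph p * bet q) := by
  obtain ⟨m, hm, hnum⟩ := num p q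
  obtain ⟨l1, l2, l3⟩ := hs.lt
  have e := hs.card
  have b1 := hs.boundR sym ih h hA hB hrb hr hb hE
  have b2 := hs.swap.boundR sym ih h hA hB hrb.symm hb hr hE'
  have g := (h.mono hs.hP).move hT
  have b3 := ih.paw sym l1 g (card_erase' hb hA) (card_insert' (h.notB hb) hB)
    (Finset.mem_erase.2 ⟨hrb, hr⟩) (hs.jR.noPaw sym hs.hP hs.hR (h.noH r hr) hs.Rne)
  have e5 : alph p * bet (q + 1 + 1) = 5 * (alph p * bet q) := by
    simp only [bet]; ring
  rw [e5] at b3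
  omega

/-- both colours `H₂`-free, `P` has a red edge -/
theorem Split.caseAA (sym : ∀ u v, c u v = c v u) {P R D : Finset V} (hs : Split c S r b P R D)
    (ih : IHyp c S.card) (h : Good c S A B) (hA : A.card = p + 2) (hB : B.card = q)
    (hrb : r ≠ b) (hr : r ∈ A) (hb : b ∈ A) (hE : ¬ NoE c r P) :
    S.card ≤ 17 * (alph p * bet q) := by
  obtain ⟨m, hm, hnum⟩ := num p q
  obtain ⟨l1, l2, l3⟩ := hs.lt
  have e := hs.card
  have hrA : r ∈ A.erase b := Finset.mem_erase.2 ⟨hrb, hr⟩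
  have pawr := hs.jR.noPaw sym hs.hP hs.hR (h.noH r hr) hs.Rne
  by_cases hE' : NoE c b P
  · -- no blue edges in `P`
    have g := (h.mono hs.hP).eraseA hE'
    have bD := ih.bdAT l3 (h.mono hs.hD) (p := p + 1) hA hB hb
      ((hs.jD.symm sym).noT sym hs.hD hs.hP (h.noH b hb) (card_two_of_edge hE))
    by_cases hT : NoT c r P
    · have bP := ih.bdAT l1 g (card_erase' hb hA) hB hrA hT
      have bR := hs.boundR sym ih h hA hB hrb hr hb hE
      omega
    · have bP := ih.paw sym l1 g (card_erase' hb hA) hB hrA pawr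
      have bR := hs.one sym (h.noH r hr) hT
      omega
  · by_cases hT' : NoT c b P
    · exact hs.caseRB sym ih h hA hB hrb hr hb hE hE' hT'
    by_cases hT : NoT c r P
    · exact hs.swap.caseRB sym ih h hA hB hrb.symm hb hr hE' hE hT
    have bR := hs.one sym (h.noH r hr) hT
    have bD := hs.swap.one sym (h.noH b hb) hT'
    have bP := ih.paw sym l1 (h.mono hs.hP) (p := p + 1) hA hB hr pawr
    omega

/-- red `H₂`-free, blue triangle-free, `P` has a red edge -/
theorem Split.caseAB (sym : ∀ u v, c u v = c v u) {P R D : Finset V} (hs : Split c S r b P R D)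
    (ih : IHyp c S.card) (h : Good c S A B) (hA : A.card = p + 1) (hB : B.card = q + 1)
    (hr : r ∈ A) (hb : b ∈ B) (hE : ¬ NoE c r P) :
    S.card ≤ alph (p + 1) * bet (q + 1) := by
  obtain ⟨m, hm, hnum⟩ := num p q
  obtain ⟨l1, l2, l3⟩ := hs.lt
  have e := hs.card
  have pawr := hs.jR.noPaw sym hs.hP hs.hR (h.noH r hr) hs.Rne
  have g := (h.mono hs.hP).eraseB (hs.jD.noE sym hs.hP hs.hD (h.noT b hb) hs.Dne)
  have bD := ih.bdBE l3 (h.mono hs.hD) hA hB hb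
    ((hs.jD.symm sym).noE sym hs.hD hs.hP (h.noT b hb) hs.Pne)
  by_cases hT : NoT c r P
  · have bP := ih.bdAT l1 g hA (card_erase' hb hB) hr hT
    have bR : R.card ≤ alph p * bet (q + 1) := by
      rcases hs.jR.dich sym hs.hP hs.hR (h.noH r hr) hE with hR | hR
      · exact ih.bdAE l2 (h.mono hs.hR) hA hB hr hR
      · omega
    omega
  · have bP := ih.paw sym l1 g hA (card_erase' hb hB) hr pawr
    have bR := hs.one sym (h.noH r hr) hT
    omega

/-- A set which splits into two sets joined in one colour. -/
theorem cut_bound (sym : ∀ u v, c u v = c v u) (ih : IHyp c S.card) (h : Good c S A B)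
    (hX : X ⊆ S) (hY : Y ⊆ S) (hXne : X.Nonempty) (hYne : Y.Nonempty)
    (hc : X.card + Y.card = S.card) (hJ : MJoin c i X Y) :
    S.card ≤ alph A.card * bet B.card := by
  have l1 := Finset.card_pos.2 hXne
  have l2 := Finset.card_pos.2 hYne
  obtain ⟨x, hx⟩ := hXne
  obtain ⟨y, hy⟩ := hYne
  have hxy := hJ x hx y hy
  have hi := h.col x (hX hx) y (hY hy) hxy.1
  rw [hxy.2] at hi
  rcases hi with hi | hi
  · obtain ⟨p, hp⟩ : ∃ p, A.card = p + 1 :=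
      ⟨A.card - 1, by have := Finset.card_pos.2 ⟨i, hi⟩; omega⟩
    have := ih.join sym hX hY (by omega) (by omega) ⟨x, hx⟩ ⟨y, hy⟩ h hp rfl hi hJ
    obtain ⟨m, hm, hnum⟩ := num p B.card
    rw [hp]
    omega
  · obtain ⟨q, hq⟩ : ∃ q, B.card = q + 1 :=
      ⟨B.card - 1, by have := Finset.card_pos.2 ⟨i, hi⟩; omega⟩
    have b1 := ih.bdBE (by omega) (h.mono hX) rfl hq hi
      (hJ.noE sym hX hY (h.noT i hi) ⟨y, hy⟩)
    have b2 := ih.bdBE (by omega) (h.mono hY) rfl hq hi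
      ((hJ.symm sym).noE sym hY hX (h.noT i hi) ⟨x, hx⟩)
    obtain ⟨m, hm, hnum⟩ := num A.card q
    rw [hq]
    omega

/-- there is no partition of `S` into two nonempty sets joined in one colour -/
def NoCut {V C : Type} (c : V → V → C) (S : Finset V) : Prop :=
  ∀ X Y : Finset V, ∀ i : C, X ⊆ S → Y ⊆ S → X.Nonempty → Y.Nonempty →
    X.card + Y.card = S.card → MJoin c i X Y → False

/-- the part of `u` -/
def part (S : Finset V) (rep : V → V) (u : V) : Finset V := S.filter fun v => rep v = rep u

/-- the neighbourhood of the part of `u` in colour `i` -/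
def pnbr (c : V → V → C) (S : Finset V) (rep : V → V) (i : C) (u : V) : Finset V :=
  S.filter fun v => rep v ≠ rep u ∧ c u v = i

theorem mem_part {rep : V → V} {u v : V} : v ∈ part S rep u ↔ v ∈ S ∧ rep v = rep u := by
  simp [part]

theorem mem_pnbr {rep : V → V} {u v : V} :
    v ∈ pnbr c S rep i u ↔ v ∈ S ∧ rep v ≠ rep u ∧ c u v = i := by
  simp [pnbr]

theorem Parts.swap {rep : V → V} (h : Parts c S r b rep) : Parts c S b r rep :=
  ⟨h.mem, h.idem, fun u hu v hv e => (h.two u hu v hv e).symm, h.hom, h.nontriv⟩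

theorem Parts.joined (sym : ∀ u v, c u v = c v u) {rep : V → V} (h : Parts c S r b rep) {u : V}
    (hu : u ∈ S) : MJoin c i (part S rep u) (pnbr c S rep i u) := by
  intro x hx y hy
  rw [mem_part] at hx
  rw [mem_pnbr] at hy
  refine ⟨fun e => hy.2.1 (by rw [← e, hx.2]), ?_⟩
  rw [← h.hom u hu x hx.1 y hy.1 hx.2.symm hy.2.1]
  exact hy.2.2

theorem Parts.ne {rep : V → V} (sym : ∀ u v, c u v = c v u) (h : Parts c S r b rep)
    (hN : NoCut c S) {u : V} (hu : u ∈ S) : (pnbr c S rep r u).Nonempty := by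
  by_contra hne
  rw [Finset.not_nonempty_iff_eq_empty] at hne
  apply hN (part S rep u) (S \ part S rep u) b (Finset.filter_subset _ _) Finset.sdiff_subset
    ⟨u, mem_part.2 ⟨hu, rfl⟩⟩
  · obtain ⟨x, hx, y, hy, hxy⟩ := h.nontriv
    by_cases hxu : rep x = rep u
    · refine ⟨y, Finset.mem_sdiff.2 ⟨hy, fun h => hxy ?_⟩⟩
      rw [hxu, (mem_part.1 h).2]
    · exact ⟨x, Finset.mem_sdiff.2 ⟨hx, fun h => hxu (mem_part.1 h).2⟩⟩
  · have := Finset.card_sdiff_add_card_eq_card (Finset.filter_subset (fun v => rep v = rep u) S)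
    unfold part
    omega
  · intro x hx y hy
    rw [Finset.mem_sdiff] at hy
    have hyu : rep y ≠ rep u := fun e => hy.2 (mem_part.2 ⟨hy.1, e⟩)
    refine h.joined sym hu x hx y (mem_pnbr.2 ⟨hy.1, hyu, ?_⟩)
    rcases h.two u hu y hy.1 hyu.symm with e | e
    · have : y ∈ pnbr c S rep r u := mem_pnbr.2 ⟨hy.1, hyu, e⟩
      rw [hne] at this
      simp at this
    · exact e

theorem Parts.str {rep : V → V} (sym : ∀ u v, c u v = c v u) (h : Parts c S r b rep)
    (hN : NoCut c S) {u : V} (hu : u ∈ S) (hH : NoH c b S) (hE : NoE c r (pnbr c S rep r u)) :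
    NoPaw c b (pnbr c S rep r u) ∨ ∃ X Y, X ⊆ pnbr c S rep r u ∧ Y ⊆ pnbr c S rep r u ∧
      X.Nonempty ∧ Y.Nonempty ∧ X.card + Y.card = (pnbr c S rep r u).card ∧ MJoin c b X Y := by
  obtain ⟨w, hw⟩ := h.ne sym hN hu
  have hw' := mem_pnbr.1 hw
  have hsub : part S rep w ⊆ pnbr c S rep r u := by
    intro x hx
    rw [mem_part] at hx
    rw [mem_pnbr]
    refine ⟨hx.1, by rw [hx.2]; exact hw'.2.1, ?_⟩
    rw [sym, h.hom x hx.1 w hw'.1 u hu hx.2 (by rw [hx.2]; exact hw'.2.1.symm), sym]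
    exact hw'.2.2
  by_cases hall : pnbr c S rep r u ⊆ part S rep w
  · left
    have hj : MJoin c b (part S rep w) (pnbr c S rep b w) := h.joined sym hw'.1
    exact (hj.noPaw sym (Finset.filter_subset _ _) (Finset.filter_subset _ _) hH
      (h.swap.ne sym hN hw'.1)).mono hall
  · right
    refine ⟨part S rep w, pnbr c S rep r u \ part S rep w, hsub, Finset.sdiff_subset,
      ⟨w, mem_part.2 ⟨hw'.1, rfl⟩⟩, ?_, ?_, ?_⟩
    · rwa [Finset.sdiff_nonempty]
    · have := Finset.card_sdiff_add_card_eq_card hsub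
      omega
    · intro x hx y hy
      rw [Finset.mem_sdiff] at hy
      have hyS := (mem_pnbr.1 hy.1).1
      have hxp := mem_part.1 hx
      have hne : rep x ≠ rep y := fun e => hy.2 (mem_part.2 ⟨hyS, by rw [← e, hxp.2]⟩)
      have hne' : x ≠ y := fun e => hne (by rw [e])
      refine ⟨hne', (h.two x hxp.1 y hyS hne).resolve_left fun e => ?_⟩
      exact hE x (hsub hx) y hy.1 ⟨hne', e⟩

theorem Parts.split {rep : V → V} (sym : ∀ u v, c u v = c v u) (h : Parts c S r b rep)
    (hrb : r ≠ b) (hN : NoCut c S) {u : V} (hu : u ∈ S) :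
    Split c S r b (part S rep u) (pnbr c S rep r u) (pnbr c S rep b u) where
  hP := Finset.filter_subset _ _
  hR := Finset.filter_subset _ _
  hD := Finset.filter_subset _ _
  Pne := ⟨u, mem_part.2 ⟨hu, rfl⟩⟩
  Rne := h.ne sym hN hu
  Dne := h.swap.ne sym hN hu
  jR := h.joined sym hu
  jD := h.joined sym hu
  strR := h.str sym hN hu
  strD := h.swap.str sym hN hu
  card := by
    have h1 : Disjoint (part S rep u) (pnbr c S rep r u) := by
      rw [Finset.disjoint_left]
      intro x hx hx'
      exact (mem_pnbr.1 hx').2.1 (mem_part.1 hx).2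
    have h2 : Disjoint (part S rep u ∪ pnbr c S rep r u) (pnbr c S rep b u) := by
      rw [Finset.disjoint_left]
      intro x hx hx'
      rw [Finset.mem_union] at hx
      rcases hx with hx | hx
      · exact (mem_pnbr.1 hx').2.1 (mem_part.1 hx).2
      · exact hrb ((mem_pnbr.1 hx).2.2.symm.trans (mem_pnbr.1 hx').2.2)
    rw [← Finset.card_union_of_disjoint h1, ← Finset.card_union_of_disjoint h2]
    congr 1
    ext x
    simp only [Finset.mem_union, mem_part, mem_pnbr]
    constructor
    · rintro ((hx | hx) | hx) <;> exact hx.1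
    · intro hx
      by_cases e : rep x = rep u
      · exact Or.inl (Or.inl ⟨hx, e⟩)
      · rcases h.two u hu x hx (Ne.symm e) with e' | e'
        · exact Or.inl (Or.inr ⟨hx, e, e'⟩)
        · exact Or.inr ⟨hx, e, e'⟩

theorem Parts.count {rep : V → V} (h : Parts c S r b rep) {N : ℕ}
    (hN : ∀ u ∈ S, (part S rep u).card ≤ N) : S.card ≤ N * (S.image rep).card := by
  apply Finset.card_le_mul_card_image
  intro v hv
  obtain ⟨u, hu, rfl⟩ := Finset.mem_image.1 hv
  exact hN u hu

theorem Parts.image_sub {rep : V → V} (h : Parts c S r b rep) : S.image rep ⊆ S := by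
  intro v hv
  obtain ⟨u, hu, rfl⟩ := Finset.mem_image.1 hv
  exact h.mem u hu

theorem Parts.image_two {rep : V → V} (h : Parts c S r b rep) : Two c r b (S.image rep) := by
  intro v hv w hw hvw
  obtain ⟨u, hu, rfl⟩ := Finset.mem_image.1 hv
  obtain ⟨u', hu', rfl⟩ := Finset.mem_image.1 hw
  exact h.two _ (h.mem u hu) _ (h.mem u' hu') (by rwa [h.idem, h.idem])

theorem mainAB [Fintype V] {rep : V → V} (sym : ∀ u v, c u v = c v u) (ih : IHyp c S.card)
    (h : Good c S A B) (hP : Parts c S r b rep) (hN : NoCut c S) (hrb : r ≠ b) (hr : r ∈ A)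
    (hb : b ∈ B) : S.card ≤ alph A.card * bet B.card := by
  obtain ⟨p, hp⟩ : ∃ p, A.card = p + 1 :=
    ⟨A.card - 1, by have := Finset.card_pos.2 ⟨r, hr⟩; omega⟩
  obtain ⟨q, hq⟩ : ∃ q, B.card = q + 1 :=
    ⟨B.card - 1, by have := Finset.card_pos.2 ⟨b, hb⟩; omega⟩
  rw [hp, hq]
  by_cases hall : ∀ u ∈ S, NoE c r (part S rep u)
  · have h1 : S.card ≤ (alph p * bet q) * (S.image rep).card := by
      apply hP.count
      intro u hu
      have hs := hP.split sym hrb hN hu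
      have g := (h.mono hs.hP).eraseB (hs.jD.noE sym hs.hP hs.hD (h.noT b hb) hs.Dne)
      exact ih.bdAE hs.lt.1 g hp (card_erase' hb hq) hr (hall u hu)
    have h2 := R3H sym hrb hP.image_two ((h.noH r hr).mono hP.image_sub)
      ((h.noT b hb).mono hP.image_sub)
    obtain ⟨m, hm, hnum⟩ := num p q
    have h3 := Nat.mul_le_mul_left (alph p * bet q) h2
    omega
  · push Not at hall
    obtain ⟨u, hu, hE⟩ := hall
    exact (hP.split sym hrb hN hu).caseAB sym ih h hp hq hr hb hE

theorem upper_aux [Fintype V] (sym : ∀ u v, c u v = c v u) (gal : Gal c) :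
    ∀ n, IHyp c n := by
  intro n
  induction n with
  | zero => exact fun T hT => absurd hT (Nat.not_lt_zero _)
  | succ n ih0 =>
    intro S hS A B h
    have ih : IHyp c S.card := fun T hT => ih0 T (by omega)
    by_cases h2 : S.card ≤ 1
    · obtain ⟨m, hm, hnum⟩ := num A.card B.card
      omega
    by_cases hN : NoCut c S
    swap
    · simp only [NoCut, not_forall] at hN
      obtain ⟨X, Y, i, hX, hY, hXn, hYn, hc, hJ, -⟩ := hN
      exact cut_bound sym ih h hX hY hXn hYn hc hJ
    obtain ⟨r, b, X, hX, hXn, hYn, hXY⟩ := gallai_cut sym gal S (by omega)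
    obtain ⟨rep, hP⟩ := exists_parts sym gal hX hXn hYn hXY
    have hrb : r ≠ b := by
      rintro rfl
      refine hN X (S \ X) r hX Finset.sdiff_subset hXn hYn ?_ ?_
      · have := Finset.card_sdiff_add_card_eq_card hX
        omega
      · intro x hx y hy
        refine ⟨fun e => (Finset.mem_sdiff.1 hy).2 (e ▸ hx), ?_⟩
        exact (hXY x hx y hy).elim id id
    obtain ⟨u0, hu0⟩ := Finset.card_pos.1 (show 0 < S.card by omega)
    have hs0 := hP.split sym hrb hN hu0
    have hu0' : u0 ∈ part S rep u0 := mem_part.2 ⟨hu0, rfl⟩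
    have hr : r ∈ A ∨ r ∈ B := by
      obtain ⟨y, hy⟩ := hs0.Rne
      have e := hs0.jR u0 hu0' y hy
      rw [← e.2]
      exact h.col u0 hu0 y (hs0.hR hy) e.1
    have hb : b ∈ A ∨ b ∈ B := by
      obtain ⟨y, hy⟩ := hs0.Dne
      have e := hs0.jD u0 hu0' y hy
      rw [← e.2]
      exact h.col u0 hu0 y (hs0.hD hy) e.1
    rcases hr with hr | hr <;> rcases hb with hb | hb
    · obtain ⟨p, hp⟩ : ∃ p, A.card = p + 2 :=
        ⟨A.card - 2, by have := Finset.one_lt_card.2 ⟨r, hr, b, hb, hrb⟩; omega⟩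
      have e17 : alph A.card * bet B.card = 17 * (alph p * bet B.card) := by
        rw [hp]; simp only [alph]; ring
      rw [e17]
      by_cases hall : ∀ u ∈ S, NoE c r (part S rep u) ∧ NoE c b (part S rep u)
      · have h1 : S.card ≤ (alph p * bet B.card) * (S.image rep).card := by
          apply hP.count
          intro u hu
          have hs := hP.split sym hrb hN hu
          exact ih.bdAE hs.lt.1 ((h.mono hs.hP).eraseA (hall u hu).2) (card_erase' hb hp) rfl
            (Finset.mem_erase.2 ⟨hrb, hr⟩) (hall u hu).1
        have h2 := RHH sym hrb hP.image_two ((h.noH r hr).mono hP.image_sub)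
          ((h.noH b hb).mono hP.image_sub)
        have h3 := Nat.mul_le_mul_left (alph p * bet B.card) h2
        omega
      · push Not at hall
        obtain ⟨u, hu, hE⟩ := hall
        have hs := hP.split sym hrb hN hu
        by_cases hEr : NoE c r (part S rep u)
        · exact hs.swap.caseAA sym ih h hp rfl hrb.symm hb hr (hE hEr)
        · exact hs.caseAA sym ih h hp rfl hrb hr hb hEr
    · exact mainAB sym ih h hP hN hrb hr hb
    · exact mainAB sym ih h hP.swap hN hrb.symm hb hr
    · obtain ⟨q, hq⟩ : ∃ q, B.card = q + 2 :=
        ⟨B.card - 2, by have := Finset.one_lt_card.2 ⟨r, hr, b, hb, hrb⟩; omega⟩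
      have e5 : alph A.card * bet B.card = 5 * (alph A.card * bet q) := by
        rw [hq]; simp only [bet]; ring
      rw [e5]
      have h1 : S.card ≤ (alph A.card * bet q) * (S.image rep).card := by
        apply hP.count
        intro u hu
        have hs := hP.split sym hrb hN hu
        have g := (h.mono hs.hP).eraseB (hs.jD.noE sym hs.hP hs.hD (h.noT b hb) hs.Dne)
        exact ih.bdBE hs.lt.1 g rfl (card_erase' hb hq) (Finset.mem_erase.2 ⟨hrb, hr⟩)
          (hs.jR.noE sym hs.hP hs.hR (h.noT r hr) hs.Rne)
      have h2 := R33 hrb hP.image_two ((h.noT r hr).mono hP.image_sub)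
        ((h.noT b hb).mono hP.image_sub)
      have h3 := Nat.mul_le_mul_left (alph A.card * bet q) h2
      omega

end main

/-! ### The lower bound -/

/-- there is a Gallai colouring of the complete graph on `V` with `k` colours without `H₂` -/
def Low (k : ℕ) (V : Type) [Fintype V] : Prop :=
  ∃ c : V → V → ℕ, (∀ u v, c u v = c v u) ∧ Gal c ∧ (∀ u v, u ≠ v → c u v < k) ∧
    ∀ i, NoH c i Finset.univ

theorem Low.pull {k : ℕ} {V W : Type} [Fintype V] [Fintype W] (h : Low k V) (f : W → V)
    (hf : Function.Injective f) : Low k W := by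
  obtain ⟨c, h1, h2, h3, h4⟩ := h
  have hCE : ∀ i u v, CE (fun u v => c (f u) (f v)) i u v → CE c i (f u) (f v) :=
    fun i u v h => ⟨hf.ne h.1, h.2⟩
  refine ⟨fun u v => c (f u) (f v), fun u v => h1 _ _, ?_, fun u v e => h3 _ _ (hf.ne e), ?_⟩
  · intro u v w e1 e2 e3
    exact h2 _ _ _ (hf.ne e1) (hf.ne e2) (hf.ne e3)
  · intro i x _ y _ z _ w _ t _ a1 a2 a3 a4 a5 a6 a7 a8 a9 a10
    exact h4 i (f x) (Finset.mem_univ _) (f y) (Finset.mem_univ _) (f z) (Finset.mem_univ _)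
      (f w) (Finset.mem_univ _) (f t) (Finset.mem_univ _) (hCE _ _ _ a1) (hCE _ _ _ a2)
      (hCE _ _ _ a3) (hCE _ _ _ a4) (hCE _ _ _ a5) (hCE _ _ _ a6) (hCE _ _ _ a7)
      (hCE _ _ _ a8) (hf.ne a9) (hf.ne a10)

/-- quadratic residues modulo 17 -/
def isQ (a : Fin 17) : Bool := Nat.testBit 107286 a.val

theorem isQ_neg : ∀ x y : Fin 17, isQ (x - y) = isQ (y - x) := by decide

theorem paley_aux : ∀ e : Bool, ∀ p : Fin 17, p ≠ 0 → isQ p = e → ∀ q : Fin 17, q ≠ 0 →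
    isQ q = e → p ≠ q → isQ (p - q) = e → ∀ s : Fin 17, s ≠ 0 → isQ s = e → p ≠ s →
    isQ (p - s) = e → q ≠ s → isQ (q - s) = e → False := by
  decide +kernel

theorem paley (e : Bool) (x y z w : Fin 17) (h1 : x ≠ y) (h2 : x ≠ z) (h3 : x ≠ w) (h4 : y ≠ z)
    (h5 : y ≠ w) (h6 : z ≠ w) (e1 : isQ (x - y) = e) (e2 : isQ (x - z) = e)
    (e3 : isQ (x - w) = e) (e4 : isQ (y - z) = e) (e5 : isQ (y - w) = e)
    (e6 : isQ (z - w) = e) : False := by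
  have s : ∀ a b d : Fin 17, (a - d) - (b - d) = a - b := fun a b d => by abel
  have n : ∀ a b d : Fin 17, a ≠ b → a - d ≠ b - d := fun a b d h h' => h (by simpa using h')
  refine paley_aux e (y - x) (sub_ne_zero.2 h1.symm) (by rwa [isQ_neg]) (z - x)
    (sub_ne_zero.2 h2.symm) (by rwa [isQ_neg]) (n _ _ _ h4) (by rwa [s]) (w - x)
    (sub_ne_zero.2 h3.symm) (by rwa [isQ_neg]) (n _ _ _ h5) (by rwa [s]) (n _ _ _ h6) (by rwa [s])

/-- the Paley colouring with every vertex replaced by a copy of the colouring `c` -/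
def blow {V : Type} (k : ℕ) (c : V → V → ℕ) (x y : Fin 17 × V) : ℕ :=
  if x.1 = y.1 then c x.2 y.2 else if isQ (x.1 - y.1) then k else k + 1

theorem blow_eq {V : Type} {k : ℕ} {c : V → V → ℕ} {x y : Fin 17 × V} (h : x.1 = y.1) :
    blow k c x y = c x.2 y.2 := by simp [blow, h]

theorem blow_ne {V : Type} {k : ℕ} {c : V → V → ℕ} {x y : Fin 17 × V} (h : x.1 ≠ y.1) :
    blow k c x y = if isQ (x.1 - y.1) then k else k + 1 := by simp [blow, h]

theorem Low.step {k : ℕ} {V : Type} [Fintype V] (h : Low k V) : Low (k + 2) (Fin 17 × V) := by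
  obtain ⟨c, h1, h2, h3, h4⟩ := h
  have hne : ∀ x y : Fin 17 × V, x ≠ y → x.1 = y.1 → x.2 ≠ y.2 :=
    fun x y h e e' => h (Prod.ext e e')
  have hsym : ∀ u v, blow k c u v = blow k c v u := by
    intro u v
    by_cases e : u.1 = v.1
    · rw [blow_eq e, blow_eq e.symm, h1]
    · rw [blow_ne e, blow_ne (Ne.symm e), isQ_neg]
  refine ⟨blow k c, hsym, ?_, ?_, ?_⟩
  · intro u v w e1 e2 e3
    by_cases a1 : u.1 = v.1
    · by_cases a2 : u.1 = w.1
      · have a3 : v.1 = w.1 := a1.symm.trans a2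
        rw [blow_eq a1, blow_eq a2, blow_eq a3]
        exact h2 _ _ _ (hne _ _ e1 a1) (hne _ _ e2 a2) (hne _ _ e3 a3)
      · have a3 : v.1 ≠ w.1 := fun h => a2 (a1.trans h)
        rw [blow_ne a2, blow_ne a3, a1]
        exact Or.inr (Or.inr rfl)
    · by_cases a2 : u.1 = w.1
      · rw [hsym v w, blow_ne a1, blow_ne (fun h => a1 (a2.trans h)), a2]
        exact Or.inr (Or.inl rfl)
      · by_cases a3 : v.1 = w.1
        · rw [blow_ne a1, blow_ne a2, a3]
          exact Or.inl rfl
        · rw [blow_ne a1, blow_ne a2, blow_ne a3]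
          split_ifs <;> simp
  · intro u v e
    by_cases a : u.1 = v.1
    · rw [blow_eq a]
      have := h3 _ _ (hne _ _ e a)
      omega
    · rw [blow_ne a]
      split_ifs <;> omega
  · intro i x _ y _ z _ w _ t _ a1 a2 a3 a4 a5 a6 a7 a8 a9 a10
    by_cases hi : i < k
    · have key : ∀ u v, CE (blow k c) i u v → u.1 = v.1 ∧ CE c i u.2 v.2 := by
        intro u v h
        by_cases a : u.1 = v.1
        · exact ⟨a, hne _ _ h.1 a, by rw [← h.2, blow_eq a]⟩
        · have h' := h.2
          rw [blow_ne a] at h'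
          split_ifs at h' <;> omega
      have b1 := key _ _ a1
      have b2 := key _ _ a2
      have b3 := key _ _ a3
      have b7 := key _ _ a7
      exact h4 i x.2 (Finset.mem_univ _) y.2 (Finset.mem_univ _) z.2 (Finset.mem_univ _)
        w.2 (Finset.mem_univ _) t.2 (Finset.mem_univ _) b1.2 b2.2 b3.2 (key _ _ a4).2
        (key _ _ a5).2 (key _ _ a6).2 b7.2 (key _ _ a8).2
        (hne _ _ a9 (b7.1.trans b2.1)) (hne _ _ a10 (b7.1.trans b3.1))
    · have key : ∀ u v, CE (blow k c) i u v → u.1 ≠ v.1 ∧ isQ (u.1 - v.1) = decide (i = k) := by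
        intro u v h
        by_cases a : u.1 = v.1
        · have h' := h.2
          rw [blow_eq a] at h'
          have := h3 _ _ (hne _ _ h.1 a)
          omega
        · refine ⟨a, ?_⟩
          have h' := h.2
          rw [blow_ne a] at h'
          split_ifs at h' with h5
          · rw [h5, ← h']; simp
          · rw [← h']; simpa using h5
      exact paley (decide (i = k)) x.1 y.1 z.1 w.1 (key _ _ a1).1 (key _ _ a2).1 (key _ _ a3).1
        (key _ _ a4).1 (key _ _ a5).1 (key _ _ a6).1 (key _ _ a1).2 (key _ _ a2).2 (key _ _ a3).2
        (key _ _ a4).2 (key _ _ a5).2 (key _ _ a6).2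

theorem low_alph : ∀ k, Low k (Fin (alph k))
  | 0 => by
    refine ⟨fun _ _ => 0, fun _ _ => rfl, fun _ _ _ _ _ _ => Or.inl rfl, ?_, ?_⟩
    · intro u v h
      exact (h (Subsingleton.elim (α := Fin 1) u v)).elim
    · intro i x _ y _ z _ w _ t _ h
      exact (h.1 (Subsingleton.elim (α := Fin 1) x y)).elim
  | 1 => by
    refine ⟨fun _ _ => 0, fun _ _ => rfl, fun _ _ _ _ _ _ => Or.inl rfl,
      fun _ _ _ => Nat.zero_lt_one, ?_⟩
    intro i x _ y _ z _ w _ t _ ⟨a1, _⟩ ⟨a2, _⟩ ⟨a3, _⟩ ⟨a4, _⟩ ⟨a5, _⟩ ⟨a6, _⟩ ⟨a7, _⟩ ⟨a8, _⟩ a9 a10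
    have e : ∀ u : Fin (alph 1), u.val < 4 := fun u => u.isLt
    have := e x
    have := e y
    have := e z
    have := e w
    have := e t
    simp only [ne_eq, Fin.ext_iff] at *
    omega
  | n + 2 => by
    have h := (low_alph n).step
    have e : Fintype.card (Fin 17 × Fin (alph n)) = alph (n + 2) := by
      simp [alph]
    exact h.pull (Fintype.equivFinOfCardEq e).symm (Equiv.injective _)

/-! ### Conclusion -/

theorem noH_of {n k : ℕ} {c : Fin n → Fin n → Fin k} (sym : ∀ u v, c u v = c v u) {i : Fin k}
    (h : ¬ HasMonoCopy GH2 c i) : NoH c i Finset.univ := by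
  intro x _ y _ z _ w _ t _ a1 a2 a3 a4 a5 a6 a7 a8 a9 a10
  apply h
  refine ⟨![z, t, w, x, y], ?_, ?_⟩
  · intro a b hab
    have n1 := a1.1
    have n2 := a2.1
    have n3 := a3.1
    have n4 := a4.1
    have n5 := a5.1
    have n6 := a6.1
    have n7 := a7.1
    have n8 := a8.1
    fin_cases a <;> fin_cases b <;> simp at hab ⊢ <;>
      first
      | exact n1 hab | exact n2 hab | exact n3 hab | exact n4 hab | exact n5 hab | exact n6 hab
      | exact n7 hab | exact n8 hab | exact a9 hab | exact a10 hab
      | exact n1 hab.symm | exact n2 hab.symm | exact n3 hab.symm | exact n4 hab.symm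
      | exact n5 hab.symm | exact n6 hab.symm | exact n7 hab.symm | exact n8 hab.symm
      | exact a9 hab.symm | exact a10 hab.symm
  · intro a b hab
    have m1 := a1.2
    have m2 := a2.2
    have m3 := a3.2
    have m4 := a4.2
    have m5 := a5.2
    have m6 := a6.2
    have m7 := a7.2
    have m8 := a8.2
    fin_cases a <;> fin_cases b <;> simp [GH2] at hab ⊢ <;>
      first
      | assumption
      | (rw [sym]; assumption)

theorem hasMono_of {n k : ℕ} {c : Fin n → Fin n → Fin k} {i : Fin k}
    (h : HasMonoCopy GH2 c i) : ¬ NoH c i Finset.univ := by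
  obtain ⟨f, hf, h⟩ := h
  intro hN
  have key : ∀ a b, GH2.Adj a b → CE c i (f a) (f b) := fun a b hab => ⟨hf.ne hab.ne, h a b hab⟩
  exact hN (f 3) (Finset.mem_univ _) (f 4) (Finset.mem_univ _) (f 0) (Finset.mem_univ _)
    (f 2) (Finset.mem_univ _) (f 1) (Finset.mem_univ _) (key _ _ (by simp [GH2]))
    (key _ _ (by simp [GH2])) (key _ _ (by simp [GH2])) (key _ _ (by simp [GH2]))
    (key _ _ (by simp [GH2])) (key _ _ (by simp [GH2])) (key _ _ (by simp [GH2]))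
    (key _ _ (by simp [GH2])) (hf.ne (by decide)) (hf.ne (by decide))

theorem GR_eq_alph (k : ℕ) (hk : 1 ≤ k) : GR k (fun _ => ⟨Fin 5, GH2⟩) = alph k + 1 := by
  have hmem : alph k + 1 ∈ {n : ℕ | ∀ c : Fin n → Fin n → Fin k, IsGallaiColoring c →
      ∃ i : Fin k, HasMonoCopy GH2 c i} := by
    intro c hc
    by_contra hno
    push Not at hno
    have gal : Gal c := by
      intro u v w h1 h2 h3
      by_contra h
      rw [not_or, not_or] at h
      exact hc.2 ⟨u, v, w, h1, h2, h3, h⟩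
    have good : Good c Finset.univ Finset.univ ∅ :=
      ⟨Finset.disjoint_empty_right _, fun _ _ _ _ _ => Or.inl (Finset.mem_univ _),
        fun i _ => noH_of hc.1 (hno i), fun i hi => absurd hi (Finset.notMem_empty i)⟩
    have := upper_aux hc.1 gal _ Finset.univ (Nat.lt_succ_self _) _ _ good
    simp [bet] at this
  apply le_antisymm
  · exact Nat.sInf_le hmem
  · apply le_csInf ⟨_, hmem⟩
    intro n hn
    by_contra hlt
    obtain ⟨c, h1, h2, h3, h4⟩ := (low_alph k).pull (Fin.castLE (show n ≤ alph k by omega))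
      (Fin.castLE_injective _)
    let c' : Fin n → Fin n → Fin k := fun u v =>
      if h : u = v then ⟨0, by omega⟩ else ⟨c u v, h3 u v h⟩
    have hc' : ∀ u v, u ≠ v → (c' u v).val = c u v := by
      intro u v h
      simp [c', h]
    have hg : IsGallaiColoring c' := by
      constructor
      · intro u v
        by_cases h : u = v
        · rw [h]
        · apply Fin.ext
          rw [hc' u v h, hc' v u (Ne.symm h), h1]
      · rintro ⟨u, v, w, a1, a2, a3, b1, b2, b3⟩
        rw [ne_eq, Fin.ext_iff, hc' _ _ a1, hc' _ _ a2] at b1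
        rw [ne_eq, Fin.ext_iff, hc' _ _ a1, hc' _ _ a3] at b2
        rw [ne_eq, Fin.ext_iff, hc' _ _ a2, hc' _ _ a3] at b3
        rcases h2 u v w a1 a2 a3 with h | h | h
        · exact b1 h
        · exact b2 h
        · exact b3 h
    obtain ⟨i, hi⟩ := hn c' hg
    refine hasMono_of hi ?_
    have key : ∀ u v, CE c' i u v → CE c i.val u v := by
      intro u v h
      exact ⟨h.1, by rw [← hc' u v h.1, h.2]⟩
    intro x hx y hy z hz w hw t ht a1 a2 a3 a4 a5 a6 a7 a8 a9 a10
    exact h4 i.val x hx y hy z hz w hw t ht (key _ _ a1) (key _ _ a2) (key _ _ a3) (key _ _ a4)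
      (key _ _ a5) (key _ _ a6) (key _ _ a7) (key _ _ a8) a9 a10

theorem alph_formula : ∀ m, alph (2 * m) = 17 ^ m ∧ alph (2 * m + 1) = 4 * 17 ^ m
  | 0 => by simp [alph]
  | m + 1 => by
    obtain ⟨h1, h2⟩ := alph_formula m
    have e1 : alph (2 * (m + 1)) = 17 * alph (2 * m) := rfl
    have e2 : alph (2 * (m + 1) + 1) = 17 * alph (2 * m + 1) := rfl
    rw [e1, e2, h1, h2, pow_succ]
    constructor <;> ring

/-- Theorem 1.3 (case H = H₂): for every `k ≥ 1`, `GR_k(H₂)` equals `17^(k/2) + 1`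
when `k` is even, and `4·17^((k-1)/2) + 1` when `k` is odd. -/
theorem GR_H2_value (k : ℕ) (hk : 1 ≤ k) :
    (Even k → GR k (fun _ => ⟨Fin 5, GH2⟩) = 17 ^ (k / 2) + 1) ∧
    (Odd k → GR k (fun _ => ⟨Fin 5, GH2⟩) = 4 * 17 ^ ((k - 1) / 2) + 1) := by
  rw [GR_eq_alph k hk]
  constructor
  · intro h
    obtain ⟨m, rfl⟩ := h.two_dvd
    rw [(alph_formula m).1, Nat.mul_div_cancel_left m (by norm_num)]
  · rintro ⟨m, rfl⟩
    rw [(alph_formula m).2, Nat.add_sub_cancel, Nat.mul_div_cancel_left m (by norm_num)]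
end
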